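/- Let T = ⋃_{k=1}^L Tₖ be a compact set, where each Tₖ = { x ∈ ℝⁿ : f_{k,1}(x) = ⋯ = f_{k,m_{k,1}}(x) = 0, h_{k,1}(x) ≥ 0, …, h_{k,m_{k,2}}(x) ≥ 0 } is defined by real polynomials. If for each k the set Tₖ satisfies the positive definite Lagrange Hessian (PDLH) condition at every u ∈ ∂_cT ∩ ∂Tₖ, then conv(T) is SDP representable. -/

import Mathlib

open MvPolynomial Metric Set Pointwise Filter

noncomputable section

/-- `ℝⁿ` with the Euclidean norm. -/
abbrev Rn (n : ℕ) : Type := EuclideanSpace ℝ (Fin n)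

/-- A set `S ⊆ ℝⁿ` is SDP representable if it is the projection of a spectrahedron:
there are symmetric matrices `A₀, A i, B j` with
`S = { x | ∃ u, A₀ + Σ xᵢ Aᵢ + Σ uⱼ Bⱼ ⪰ 0 }`. -/
def IsSDPRepresentable {n : ℕ} (S : Set (Rn n)) : Prop :=
  ∃ (N d : ℕ) (A₀ : Matrix (Fin d) (Fin d) ℝ)
    (A : Fin n → Matrix (Fin d) (Fin d) ℝ) (B : Fin N → Matrix (Fin d) (Fin d) ℝ),
    A₀.IsSymm ∧ (∀ i, (A i).IsSymm) ∧ (∀ j, (B j).IsSymm) ∧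
    S = {x : Rn n | ∃ u : Fin N → ℝ,
      (A₀ + ∑ i, x i • A i + ∑ j, u j • B j).PosSemidef}

/-- Evaluation of a polynomial at a point of `ℝⁿ`. -/
def peval {n : ℕ} (g : MvPolynomial (Fin n) ℝ) (x : Rn n) : ℝ :=
  MvPolynomial.eval (fun i => x i) g

/-- The gradient `∇g(u)` of a polynomial. -/
def pgrad {n : ℕ} (g : MvPolynomial (Fin n) ℝ) (u : Rn n) : Fin n → ℝ :=
  fun i => MvPolynomial.eval (fun j => u j) (MvPolynomial.pderiv i g)

/-- The Hessian `∇²g(u)` of a polynomial. -/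
def phess {n : ℕ} (g : MvPolynomial (Fin n) ℝ) (u : Rn n) : Matrix (Fin n) (Fin n) ℝ :=
  Matrix.of fun i j =>
    MvPolynomial.eval (fun k => u k) (MvPolynomial.pderiv i (MvPolynomial.pderiv j g))

/-- A polynomial `g` is sos-concave if `-∇²g(x) = W(x)ᵀ W(x)` for some
(possibly nonsquare) matrix polynomial `W`. -/
def SosConcave {n : ℕ} (g : MvPolynomial (Fin n) ℝ) : Prop :=
  ∃ (k : ℕ) (W : Fin k → Fin n → MvPolynomial (Fin n) ℝ),
    ∀ i j, - MvPolynomial.pderiv i (MvPolynomial.pderiv j g) = ∑ l, W l i * W l j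

/-- `g` is quasi-concave at `u` : `-vᵀ∇²g(u)v ≥ 0` for every `v` with `∇g(u)ᵀv = 0`. -/
def QuasiConcaveAt {n : ℕ} (g : MvPolynomial (Fin n) ℝ) (u : Rn n) : Prop :=
  ∀ v : Fin n → ℝ, (∑ i, pgrad g u i * v i) = 0 →
    0 ≤ -(∑ i, ∑ j, v i * phess g u i j * v j)

/-- `g` is strictly quasi-concave at `u` : if `∇g(u) ≠ 0` then `-vᵀ∇²g(u)v > 0`
for all nonzero `v ⊥ ∇g(u)`; if `∇g(u) = 0` then `-∇²g(u)` is positive definite. -/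
def StrictlyQuasiConcaveAt {n : ℕ} (g : MvPolynomial (Fin n) ℝ) (u : Rn n) : Prop :=
  (pgrad g u ≠ 0 ∧ ∀ v : Fin n → ℝ, v ≠ 0 → (∑ i, pgrad g u i * v i) = 0 →
      0 < -(∑ i, ∑ j, v i * phess g u i j * v j)) ∨
  (pgrad g u = 0 ∧ (-(phess g u)).PosDef)

/-- The convex boundary `∂_c T` : points of `T` minimizing some unit linear functional. -/
def convexBoundary {n : ℕ} (T : Set (Rn n)) : Set (Rn n) :=
  {u ∈ T | ∃ l : Rn n, ‖l‖ = 1 ∧ ∀ x ∈ T, (∑ i, l i * u i) ≤ ∑ i, l i * x i}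

/-- `v` is a nonsingular point of `∂T` (w.r.t. defining polynomials `g`):
exactly one defining polynomial vanishes at `v`, with nonvanishing gradient. -/
def IsNonsingularBoundaryPoint {n m : ℕ} (g : Fin m → MvPolynomial (Fin n) ℝ)
    (T : Set (Rn n)) (v : Rn n) : Prop :=
  v ∈ frontier T ∧ ∃ i, peval (g i) v = 0 ∧ pgrad (g i) v ≠ 0 ∧
    ∀ j, peval (g j) v = 0 → j = i

/-- A polynomial is SOS if it is a finite sum of squares of polynomials. -/
def IsSOSPoly {n : ℕ} (p : MvPolynomial (Fin n) ℝ) : Prop :=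
  ∃ (k : ℕ) (q : Fin k → MvPolynomial (Fin n) ℝ), p = ∑ i, (q i) ^ 2

/-- The polynomial `δ² - ‖x - u‖²`. -/
def ballPoly {n : ℕ} (u : Rn n) (δ : ℝ) : MvPolynomial (Fin n) ℝ :=
  MvPolynomial.C (δ ^ 2) - ∑ i, (MvPolynomial.X i - MvPolynomial.C (u i)) ^ 2

/-- The family `h₁, …, h_{m₂}` extended by the ball polynomial `h_m(x) = δ² - ‖x-u‖²`. -/
def extFamily {n m2 : ℕ} (h : Fin m2 → MvPolynomial (Fin n) ℝ) (u : Rn n) (δ : ℝ) :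
    Fin (m2 + 1) → MvPolynomial (Fin n) ℝ :=
  Fin.snoc h (ballPoly u δ)

/-- The positive definite Lagrange Hessian (PDLH) condition at `u` with radius `δu`,
for the set `T = {x | f(x) = 0, h(x) ≥ 0}`. -/
def PDLHAt {n m1 m2 : ℕ} (f : Fin m1 → MvPolynomial (Fin n) ℝ)
    (h : Fin m2 → MvPolynomial (Fin n) ℝ) (T : Set (Rn n)) (u : Rn n) (δu : ℝ) : Prop :=
  ∀ l : Rn n, ‖l‖ = 1 → ∀ δ : ℝ, 0 < δ → δ ≤ δu →
    ∀ v ∈ T ∩ closedBall u δ,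
      (∀ x ∈ T ∩ closedBall u δ, (∑ i, l i * v i) ≤ ∑ i, l i * x i) →
      ∃ (lam : Fin m1 → ℝ) (mu : Fin (m2 + 1) → ℝ),
        (∀ j, 0 ≤ mu j) ∧
        (∀ j, mu j * peval (extFamily h u δ j) v = 0) ∧
        (∀ i, l i = (∑ k, lam k * pgrad (f k) v i) +
            ∑ j, mu j * pgrad (extFamily h u δ j) v i) ∧
        ∀ x ∈ closedBall u δ,
          (Matrix.of (fun i i' : Fin n =>
            -(∑ k, lam k * phess (f k) x i i') -
              ∑ j, mu j * phess (extFamily h u δ j) x i i')).PosDef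

/-- `Z(g) ∩ ∂S` has strictly convex shape with respect to `S`. -/
def StrictlyConvexShape {n : ℕ} (g : MvPolynomial (Fin n) ℝ) (S : Set (Rn n)) : Prop :=
  ∃ Y U : Set (Rn n), IsOpen U ∧ Y = {x | peval g x = 0} ∩ U ∧
    {x | peval g x = 0} ∩ frontier S ⊆ Y ∧
    (∀ p ∈ closure Y, pgrad g p ≠ 0) ∧
    ∀ p ∈ closure Y,
      (∃ ε : ℝ, (ε = 1 ∨ ε = -1) ∧
        ∀ q ∈ S ∪ closure Y, ε * (∑ i, pgrad g p i * (q i - p i)) ≤ 0) ∧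
      ∀ q ∈ S ∪ closure Y, (∑ i, pgrad g p i * (q i - p i)) = 0 → q = p

/-!
Convex hulls of finite unions of bounded projected spectrahedra are projected spectrahedra: take
cones over the pieces and add them. Since a compact set has the same convex hull as any closed
subset containing its convex boundary, and the convex boundary is compact, it suffices to represent
the convex hull of `Tₖ ∩ B̄(u, δ)` for each `u ∈ ∂_cT ∩ ∂Tₖ` and some `δ > 0`.

The PDLH condition makes each Lagrangian a polynomial that is strictly concave on the ball,
nonnegative on `Tₖ ∩ B̄(u, δ)`, and zero at the minimizer. Minimizers with the same active
constraints can share one Lagrangian, so finitely many of them, together with the ball, cut out the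
hull.

A compact convex set cut out by polynomials `g` with `-∇²g ≻ 0` is again handled in small boxes. Let
`L` be a linear functional on polynomials that is nonnegative on squares of bounded degree, also
after multiplication by the inequalities defining a small box around `a`. Multiplication by `xᵢ` is
then within the size of the box of multiplication by the scalar `aᵢ`, hence the second-order Taylor
remainder of `g` is governed by `-∇²g(a) ≻ 0` and Jensen's inequality `L g ≤ g (L x)` holds. The
semidefinite constraints on `L` together with `L g ≥ 0` therefore project exactly onto `g ≥ 0`.
-/
/-! ### Spectrahedra -/

/-- A spectrahedron in a real vector space, coordinate-free: the points `v` at which a quadratic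
form `q₀ + q v`, depending affinely on `v`, is nonnegative. The quadratic forms replace symmetric
matrices so that intersections and homogenizations need no block matrices. -/
def IsSpectrahedron {V : Type*} [AddCommGroup V] [Module ℝ V] (Q : Set V) : Prop :=
  ∃ (E : Type) (_ : AddCommGroup E) (_ : Module ℝ E) (_ : FiniteDimensional ℝ E)
    (q₀ : QuadraticForm ℝ E) (q : V →ₗ[ℝ] QuadraticForm ℝ E), Q = {v | ∀ e, 0 ≤ (q₀ + q v) e}

namespace IsSpectrahedron

variable {V W : Type*} [AddCommGroup V] [Module ℝ V] [AddCommGroup W] [Module ℝ W]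

theorem comap {Q : Set V} (hQ : IsSpectrahedron Q) (φ : W →ₗ[ℝ] V) : IsSpectrahedron (φ ⁻¹' Q) := by
  obtain ⟨E, _, _, _, q₀, q, rfl⟩ := hQ
  exact ⟨E, inferInstance, inferInstance, inferInstance, q₀, q ∘ₗ φ, rfl⟩

theorem inter {Q R : Set V} (hQ : IsSpectrahedron Q) (hR : IsSpectrahedron R) :
    IsSpectrahedron (Q ∩ R) := by
  obtain ⟨E, _, _, _, q₀, q, rfl⟩ := hQ
  obtain ⟨F, _, _, _, r₀, r, rfl⟩ := hR
  let blockDiag : V →ₗ[ℝ] QuadraticForm ℝ (E × F) :=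
    { toFun := fun v => (q v).prod (r v)
      map_add' := fun x y => by ext e; simp; ring
      map_smul' := fun c x => by ext e; simp; ring }
  refine ⟨E × F, inferInstance, inferInstance, inferInstance, q₀.prod r₀, blockDiag, ?_⟩
  ext v
  have hsum : q₀.prod r₀ + blockDiag v = (q₀ + q v).prod (r₀ + r v) := by
    ext e; simp [blockDiag]; ring
  simp only [mem_inter_iff, mem_ofPred_eq, hsum, QuadraticMap.nonneg_prod_iff]

theorem univ : IsSpectrahedron (Set.univ : Set V) :=
  ⟨ℝ, inferInstance, inferInstance, inferInstance, 0, 0, by simp⟩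

theorem halfspace (k : ℝ) (φ : V →ₗ[ℝ] ℝ) : IsSpectrahedron {v | 0 ≤ k + φ v} := by
  refine ⟨ℝ, inferInstance, inferInstance, inferInstance, k • QuadraticMap.sq,
    φ.smulRight QuadraticMap.sq, ?_⟩
  ext v
  have hform (e : ℝ) : (k • QuadraticMap.sq + φ.smulRight QuadraticMap.sq v :
      QuadraticForm ℝ ℝ) e = (k + φ v) * (e * e) := by simp; ring
  simp only [mem_ofPred_eq, hform]
  exact ⟨fun h e => mul_nonneg h (mul_self_nonneg e), fun h => by simpa using h 1⟩

theorem iInter {ι : Type*} [Finite ι] {Q : ι → Set V} (h : ∀ i, IsSpectrahedron (Q i)) :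
    IsSpectrahedron (⋂ i, Q i) := by
  induction ι using Finite.induction_empty_option with
  | of_equiv e ih => exact e.surjective.iInter_comp Q ▸ ih fun i => h (e i)
  | h_empty => simpa using univ
  | h_option ih => exact Set.iInter_option Q ▸ (h none).inter (ih fun i => h (some i))

theorem setOf_eq [FiniteDimensional ℝ W] (φ : V →ₗ[ℝ] W) (k : W) :
    IsSpectrahedron {v | φ v = k} := by
  let b := Module.finBasis ℝ W
  convert (iInter fun i => halfspace (-b.coord i k) (b.coord i ∘ₗ φ)).inter
    (iInter fun i => halfspace (b.coord i k) (-(b.coord i ∘ₗ φ))) using 1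
  ext v
  simp only [mem_ofPred_eq, mem_inter_iff, mem_iInter, b.ext_elem_iff, ← forall_and]
  refine forall_congr' fun i => ?_
  rw [le_neg_add_iff_add_le, add_zero, LinearMap.neg_apply, ← sub_eq_add_neg, sub_nonneg,
    le_antisymm_iff, and_comm]
  rfl

/-- The cone over `Q`, with the homogenizing variable in the first coordinate. -/
theorem exists_pointedCone {Q : Set V} (hQ : IsSpectrahedron Q) :
    ∃ C : PointedCone ℝ (ℝ × V), IsSpectrahedron (C : Set (ℝ × V)) ∧ ∀ v, (1, v) ∈ C ↔ v ∈ Q := by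
  obtain ⟨E, _, _, _, q₀, q, rfl⟩ := hQ
  let r : ℝ × V →ₗ[ℝ] QuadraticForm ℝ E := (LinearMap.toSpanSingleton ℝ _ q₀).coprod q
  let C : PointedCone ℝ (ℝ × V) :=
    { carrier := {p | ∀ e, 0 ≤ r p e}
      add_mem' := fun hx hy e => by
        rw [map_add]; exact add_nonneg (hx e) (hy e)
      zero_mem' := fun e => by simp
      smul_mem' := fun c x hx e => by
        rw [← Nonneg.coe_smul, map_smul]; exact mul_nonneg c.2 (hx e) }
  refine ⟨C, ⟨E, inferInstance, inferInstance, inferInstance, 0, r, ?_⟩, fun v => ?_⟩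
  · simp only [zero_add]; rfl
  · change (∀ e, 0 ≤ r (1, v) e) ↔ _
    simp [r]

theorem convex {Q : Set V} (hQ : IsSpectrahedron Q) : Convex ℝ Q := by
  obtain ⟨C, -, hC⟩ := hQ.exists_pointedCone
  intro v hv w hw s t hs ht hst
  have hmem := C.add_mem (C.smul_mem hs ((hC v).2 hv)) (C.smul_mem ht ((hC w).2 hw))
  rw [← hC]
  simpa [hst] using hmem

end IsSpectrahedron

/-! ### Spectrahedral shadows -/

/-- A spectrahedral shadow (projected spectrahedron) in a real vector space: the coordinate-free
form of SDP representability, with an auxiliary space of any dimension. -/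
def IsSpectrahedralShadow {W : Type} [AddCommGroup W] [Module ℝ W] (S : Set W) : Prop :=
  ∃ (V : Type) (_ : AddCommGroup V) (_ : Module ℝ V) (Q : Set (W × V)),
    IsSpectrahedron Q ∧ Prod.fst '' Q = S

theorem IsSpectrahedron.isSpectrahedralShadow {W : Type} [AddCommGroup W] [Module ℝ W] {S : Set W}
    (hS : IsSpectrahedron S) : IsSpectrahedralShadow S := by
  refine ⟨PUnit, inferInstance, inferInstance, Prod.fst ⁻¹' S,
    hS.comap (LinearMap.fst ℝ W PUnit), ?_⟩
  exact Set.image_preimage_eq S Prod.fst_surjective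

theorem eq_zero_of_isBounded_of_add_smul_mem {W : Type*} [NormedAddCommGroup W] [NormedSpace ℝ W]
    {S : Set W} (hS : Bornology.IsBounded S) {x d : W} (h : ∀ s : ℝ, 0 ≤ s → x + s • d ∈ S) :
    d = 0 := by
  obtain ⟨C, hC⟩ := hS.exists_norm_le
  by_contra hd
  have hpos : 0 < ‖d‖ := norm_pos_iff.mpr hd
  have hC0 : 0 ≤ C := (norm_nonneg _).trans (hC _ (h 0 le_rfl))
  have hs : 0 ≤ (C + ‖x‖ + 1) / ‖d‖ := by positivity
  have hnorm : ‖((C + ‖x‖ + 1) / ‖d‖) • d‖ = C + ‖x‖ + 1 := by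
    rw [norm_smul, Real.norm_of_nonneg hs, div_mul_cancel₀ _ hpos.ne']
  have htri := norm_sub_le (x + ((C + ‖x‖ + 1) / ‖d‖) • d) x
  rw [add_sub_cancel_left, hnorm] at htri
  linarith [hC _ (h _ hs)]

namespace IsSpectrahedralShadow

section Algebra

variable {W W' : Type} [AddCommGroup W] [Module ℝ W] [AddCommGroup W'] [Module ℝ W']
  {S T : Set W}

theorem univ : IsSpectrahedralShadow (Set.univ : Set W) :=
  IsSpectrahedron.univ.isSpectrahedralShadow

theorem empty : IsSpectrahedralShadow (∅ : Set W) := by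
  have h := (IsSpectrahedron.halfspace (-1) (0 : W →ₗ[ℝ] ℝ)).isSpectrahedralShadow
  have hempty : {v : W | 0 ≤ -1 + (0 : W →ₗ[ℝ] ℝ) v} = ∅ := by ext v; norm_num
  rwa [hempty] at h

theorem comap (hS : IsSpectrahedralShadow S) (φ : W' →ₗ[ℝ] W) :
    IsSpectrahedralShadow (φ ⁻¹' S) := by
  obtain ⟨V, _, _, Q, hQ, rfl⟩ := hS
  refine ⟨V, inferInstance, inferInstance, φ.prodMap LinearMap.id ⁻¹' Q, hQ.comap _, ?_⟩
  ext w
  simp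

theorem inter (hS : IsSpectrahedralShadow S) (hT : IsSpectrahedralShadow T) :
    IsSpectrahedralShadow (S ∩ T) := by
  obtain ⟨V, _, _, Q, hQ, rfl⟩ := hS
  obtain ⟨V', _, _, R, hR, rfl⟩ := hT
  refine ⟨V × V', inferInstance, inferInstance, _,
    (hQ.comap (LinearMap.id.prodMap (LinearMap.fst ℝ V V'))).inter
      (hR.comap (LinearMap.id.prodMap (LinearMap.snd ℝ V V'))), ?_⟩
  ext w
  simp

theorem iInter {ι : Type*} [Finite ι] {S : ι → Set W} (h : ∀ i, IsSpectrahedralShadow (S i)) :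
    IsSpectrahedralShadow (⋂ i, S i) := by
  induction ι using Finite.induction_empty_option with
  | of_equiv e ih => exact e.surjective.iInter_comp S ▸ ih fun i => h (e i)
  | h_empty => simpa using univ
  | h_option ih => exact Set.iInter_option S ▸ (h none).inter (ih fun i => h (some i))

theorem image [FiniteDimensional ℝ W'] (hS : IsSpectrahedralShadow S) (φ : W →ₗ[ℝ] W') :
    IsSpectrahedralShadow (φ '' S) := by
  obtain ⟨V, _, _, Q, hQ, rfl⟩ := hS
  let graphDefect : W' × (W × V) →ₗ[ℝ] W' :=
    LinearMap.fst ℝ W' (W × V) - φ ∘ₗ LinearMap.fst ℝ W V ∘ₗ LinearMap.snd ℝ W' (W × V)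
  refine ⟨W × V, inferInstance, inferInstance, _,
    (hQ.comap (LinearMap.snd ℝ W' (W × V))).inter (IsSpectrahedron.setOf_eq graphDefect 0), ?_⟩
  ext w'
  simp only [graphDefect, LinearMap.sub_apply, sub_eq_zero]
  simp only [mem_image, mem_inter_iff, mem_preimage, mem_ofPred_eq, Prod.exists, exists_and_right,
    exists_eq_right, LinearMap.snd_apply, LinearMap.fst_apply, LinearMap.comp_apply]
  exact exists_congr fun w => and_congr_right' eq_comm

theorem singleton [FiniteDimensional ℝ W] (x : W) : IsSpectrahedralShadow {x} :=
  (IsSpectrahedron.setOf_eq LinearMap.id x).isSpectrahedralShadow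

theorem of_subsingleton [FiniteDimensional ℝ W] (hS : S.Subsingleton) :
    IsSpectrahedralShadow S := by
  rcases hS.eq_empty_or_singleton with rfl | ⟨x, rfl⟩
  exacts [empty, singleton x]

theorem convex (hS : IsSpectrahedralShadow S) : Convex ℝ S := by
  obtain ⟨V, _, _, Q, hQ, rfl⟩ := hS
  exact hQ.convex.linear_image (LinearMap.fst ℝ W V)

end Algebra

section Bounded

variable {W : Type} [NormedAddCommGroup W] [NormedSpace ℝ W] {S T : Set W}

-- At `t = 0` the cone over a spectrahedron is its recession cone, which boundedness makes trivial.
theorem setOf_mem_smul (hS : IsSpectrahedralShadow S) (hb : Bornology.IsBounded S)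
    (hne : S.Nonempty) : IsSpectrahedralShadow {p : ℝ × W | 0 ≤ p.1 ∧ p.2 ∈ p.1 • S} := by
  obtain ⟨V, _, _, Q, hQ, rfl⟩ := hS
  obtain ⟨C, hC, hCQ⟩ := hQ.exists_pointedCone
  obtain ⟨-, ⟨w₀, v₀⟩, h₀, rfl⟩ := hne
  have hCS : ∀ {w v}, ((1 : ℝ), (w, v)) ∈ C → w ∈ Prod.fst '' Q := fun h => ⟨_, (hCQ _).1 h, rfl⟩
  refine ⟨V, inferInstance, inferInstance, _,
    (hC.comap (LinearEquiv.prodAssoc ℝ ℝ W V).toLinearMap).inter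
      (IsSpectrahedron.halfspace 0 (LinearMap.fst ℝ ℝ W ∘ₗ LinearMap.fst ℝ (ℝ × W) V)), ?_⟩
  ext ⟨t, w⟩
  simp only [zero_add]
  constructor
  · rintro ⟨⟨⟨t, w⟩, v⟩, ⟨hmem, ht⟩, ⟨⟩⟩
    replace hmem : (t, (w, v)) ∈ C := hmem
    replace ht : 0 ≤ t := ht
    refine ⟨ht, ?_⟩
    rcases ht.eq_or_lt with rfl | hpos
    · have hw : w = 0 := eq_zero_of_isBounded_of_add_smul_mem hb (x := w₀) fun s hs => by
        have hsum := C.add_mem ((hCQ _).2 h₀) (C.smul_mem hs hmem)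
        exact hCS (v := v₀ + s • v) (by simpa using hsum)
      exact ⟨w₀, ⟨_, h₀, rfl⟩, by simp [hw]⟩
    · refine (mem_smul_set_iff_inv_smul_mem₀ hpos.ne' _ _).2 (hCS (v := t⁻¹ • v) ?_)
      simpa [hpos.ne'] using C.smul_mem (inv_nonneg.2 hpos.le) hmem
  · rintro ⟨ht, -, ⟨⟨w, v⟩, hv, rfl⟩, hw⟩
    replace hw : t • w = _ := hw
    subst hw
    refine ⟨((t, t • w), t • v), ⟨?_, ht⟩, rfl⟩
    have hmem := C.smul_mem ht ((hCQ (w, v)).2 hv)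
    simp only [Prod.smul_mk, smul_eq_mul, mul_one] at hmem
    exact hmem

theorem convexHull_union [FiniteDimensional ℝ W] (hS : IsSpectrahedralShadow (convexHull ℝ S))
    (hT : IsSpectrahedralShadow (convexHull ℝ T)) (hSb : Bornology.IsBounded S)
    (hTb : Bornology.IsBounded T) : IsSpectrahedralShadow (convexHull ℝ (S ∪ T)) := by
  rw [← convexHull_convexHull_union_left, ← convexHull_convexHull_union_right]
  rw [← isBounded_convexHull] at hSb hTb
  generalize convexHull ℝ S = S at *
  generalize convexHull ℝ T = T at *
  rcases S.eq_empty_or_nonempty with rfl | hSne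
  · rwa [Set.empty_union, hT.convex.convexHull_eq]
  rcases T.eq_empty_or_nonempty with rfl | hTne
  · rwa [Set.union_empty, hS.convex.convexHull_eq]
  let fst := LinearMap.fst ℝ (ℝ × W) (ℝ × W)
  let snd := LinearMap.snd ℝ (ℝ × W) (ℝ × W)
  have hsum := (IsSpectrahedron.setOf_eq
    (LinearMap.fst ℝ ℝ W ∘ₗ (fst + snd)) 1).isSpectrahedralShadow
  have hshadow := ((((hS.setOf_mem_smul hSb hSne).comap fst).inter
    ((hT.setOf_mem_smul hTb hTne).comap snd)).inter hsum).image
      (LinearMap.snd ℝ ℝ W ∘ₗ (fst + snd))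
  convert hshadow
  ext x
  rw [hS.convex.convexHull_union hT.convex hSne hTne, mem_convexJoin]
  constructor
  · rintro ⟨a, ha, b, hb, s, t, hs, ht, hst, rfl⟩
    exact ⟨((s, s • a), (t, t • b)),
      ⟨⟨⟨hs, smul_mem_smul_set ha⟩, ⟨ht, smul_mem_smul_set hb⟩⟩, hst⟩, rfl⟩
  · rintro ⟨⟨⟨s, y⟩, ⟨t, z⟩⟩, ⟨⟨⟨hs, a, ha, (rfl : s • a = y)⟩,
      ⟨ht, b, hb, (rfl : t • b = z)⟩⟩, hst⟩, rfl⟩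
    exact ⟨a, ha, b, hb, s, t, hs, ht, hst, rfl⟩

theorem convexHull_iUnion [FiniteDimensional ℝ W] {ι : Type*} [Finite ι] {S : ι → Set W}
    (h : ∀ i, IsSpectrahedralShadow (convexHull ℝ (S i))) (hb : ∀ i, Bornology.IsBounded (S i)) :
    IsSpectrahedralShadow (convexHull ℝ (⋃ i, S i)) := by
  induction ι using Finite.induction_empty_option with
  | of_equiv e ih => exact e.surjective.iUnion_comp S ▸ ih (fun i => h (e i)) fun i => hb (e i)
  | h_empty => simpa using empty
  | h_option ih =>
    rw [Set.iUnion_option]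
    exact (h none).convexHull_union (ih (fun i => h (some i)) fun i => hb (some i)) (hb none)
      (Bornology.isBounded_iUnion.2 fun i => hb (some i))

theorem exists_superset_convexHull_of_forall_nhdsWithin [FiniteDimensional ℝ W] {A K : Set W}
    (hA : IsCompact A) (hK : Bornology.IsBounded K)
    (hlocal : ∀ u ∈ A, ∃ R ⊆ K, IsClosed R ∧ R ∈ nhdsWithin u A ∧
      IsSpectrahedralShadow (convexHull ℝ R)) :
    ∃ R ⊆ K, A ⊆ R ∧ IsClosed R ∧ IsSpectrahedralShadow (convexHull ℝ R) := by
  refine IsCompact.induction_on hA ⟨∅, empty_subset K, subset_rfl, isClosed_empty, ?_⟩ ?_ ?_ ?_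
  · simpa using empty
  · rintro A A' hA ⟨R, hRK, hR, h⟩
    exact ⟨R, hRK, hA.trans hR, h⟩
  · rintro A A' ⟨R, hRK, hR, hRc, hRs⟩ ⟨R', hRK', hR', hRc', hRs'⟩
    exact ⟨R ∪ R', union_subset hRK hRK', union_subset_union hR hR', hRc.union hRc',
      hRs.convexHull_union hRs' (hK.subset hRK) (hK.subset hRK')⟩
  · intro u hu
    obtain ⟨R, hRK, hRc, hRu, hRs⟩ := hlocal u hu
    exact ⟨R, hRu, R, hRK, subset_rfl, hRc, hRs⟩

end Bounded

end IsSpectrahedralShadow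

theorem posSemidef_toMatrix_iff {ι E : Type*} [Fintype ι] [DecidableEq ι] [AddCommGroup E]
    [Module ℝ E] (b : Module.Basis ι ℝ E) (q : QuadraticForm ℝ E) :
    (q.toMatrix b).PosSemidef ↔ ∀ e, 0 ≤ q e := by
  have hquad (x : ι → ℝ) : star x ⬝ᵥ (q.toMatrix b).mulVec x = q (b.equivFun.symm x) := by
    rw [← QuadraticMap.associated_eq_self_apply ℝ q, star_trivial]
    exact dotProduct_toMatrix₂_mulVec b b q.associated x x
  have hherm : (q.toMatrix b).IsHermitian := by
    rw [Matrix.IsHermitian, Matrix.conjTranspose_eq_transpose_of_trivial]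
    exact QuadraticForm.isSymm_toMatrix b q
  simp only [Matrix.posSemidef_iff_dotProduct_mulVec, hherm, true_and, hquad]
  exact (b.equivFun.symm.surjective.forall (p := fun e => 0 ≤ q e)).symm

theorem exists_fin_range_eq_range_sum_smul {K V M : Type*} [Field K] [AddCommGroup V] [Module K V]
    [AddCommGroup M] [Module K M] [FiniteDimensional K M] (f : V →ₗ[K] M) :
    ∃ (N : ℕ) (B : Fin N → M), (∀ j, B j ∈ range f) ∧
      range f = range fun u : Fin N → K => ∑ j, u j • B j := by
  obtain ⟨N, B, hB⟩ := Submodule.fg_iff_exists_fin_generating_family.1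
    (IsNoetherian.noetherian f.range)
  rw [← LinearMap.coe_range, ← hB]
  refine ⟨N, B, fun j => Submodule.subset_span ⟨j, rfl⟩, ?_⟩
  ext x
  exact Submodule.mem_span_range_iff_exists_fun K

theorem IsSpectrahedralShadow.isSDPRepresentable {n : ℕ} {S : Set (Rn n)}
    (hS : IsSpectrahedralShadow S) : IsSDPRepresentable S := by
  obtain ⟨V, _, _, -, ⟨E, _, _, _, q₀, q, rfl⟩, rfl⟩ := hS
  let b := Module.finBasis ℝ E
  let M : QuadraticForm ℝ E →ₗ[ℝ] Matrix _ _ ℝ :=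
    (LinearMap.toMatrix₂ b b).toLinearMap ∘ₗ QuadraticMap.associated
  have hM (r) : (M r).IsSymm := QuadraticForm.isSymm_toMatrix b r
  let A (i : Fin n) := M (q (EuclideanSpace.basisFun (Fin n) ℝ i, 0))
  let auxiliary := M ∘ₗ q ∘ₗ LinearMap.inr ℝ (Rn n) V
  obtain ⟨N, B, hBmem, hB⟩ := exists_fin_range_eq_range_sum_smul auxiliary
  have hsplit (x : Rn n) (v : V) : M (q₀ + q (x, v)) = M q₀ + ∑ i, x i • A i + auxiliary v := by
    have hx : LinearMap.inl ℝ (Rn n) V x = ∑ i, x i • (EuclideanSpace.basisFun (Fin n) ℝ i, 0) := by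
      conv_lhs => rw [← (EuclideanSpace.basisFun (Fin n) ℝ).sum_repr x, map_sum]
      simp only [map_smul, EuclideanSpace.basisFun_repr, LinearMap.inl_apply]
    have hxv : (x, v) = LinearMap.inl ℝ (Rn n) V x + LinearMap.inr ℝ (Rn n) V v := by simp
    rw [hxv, hx, map_add, map_add, map_add, ← add_assoc]
    simp only [map_sum, map_smul, auxiliary, A, LinearMap.comp_apply]
  refine ⟨N, _, M q₀, A, B, hM _, fun i => hM _, fun j => ?_, ?_⟩
  · obtain ⟨v, hv⟩ := hBmem j
    rw [← hv]
    exact hM _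
  · have hpsd (x : Rn n) (v : V) :
        (∀ e, 0 ≤ (q₀ + q (x, v)) e) ↔ (M q₀ + ∑ i, x i • A i + auxiliary v).PosSemidef := by
      rw [← hsplit]
      exact (posSemidef_toMatrix_iff b _).symm
    ext x
    simp only [mem_image, Prod.exists, exists_and_right, exists_eq_right, mem_ofPred_eq, hpsd]
    rw [← exists_range_iff (f := auxiliary)
      (p := fun A' => (M q₀ + ∑ i, x i • A i + A').PosSemidef), hB, exists_range_iff]

/-! ### Taylor expansion with polynomial coefficients -/

section Taylor

variable {σ : Type*} [Fintype σ]

theorem sum_pderiv_mul_X {R : Type*} [CommRing R] (p : MvPolynomial σ R) (k : σ) (v : σ → R)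
    (z : σ → MvPolynomial σ R) :
    ∑ i, C (eval v (pderiv i (p * X k))) * z i =
      C (v k) * ∑ i, C (eval v (pderiv i p)) * z i + C (eval v p) * z k := by
  classical
  have hderiv (i : σ) : eval v (pderiv i (p * X k)) =
      eval v p * (if k = i then 1 else 0) + v k * eval v (pderiv i p) := by
    simp [pderiv_X, Pi.single_apply, apply_ite (eval v)]
  simp only [hderiv, map_add, map_mul, add_mul, Finset.sum_add_distrib, Finset.mul_sum, mul_assoc,
    apply_ite C, map_one, map_zero, ite_mul, one_mul, zero_mul, mul_ite, mul_zero,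
    Finset.sum_ite_eq, Finset.mem_univ, if_true]
  exact add_comm _ _

theorem sum_taylor_remainder_mul_X {R : Type*} [CommRing R] [DecidableEq σ] (p : MvPolynomial σ R)
    (k : σ) (v : σ → R) (z : σ → MvPolynomial σ R) (Q : σ → σ → MvPolynomial σ (MvPolynomial σ R)) :
    ∑ i, ∑ j, z i * z j * map (eval v) (Q i j * X k + if k = j then C (pderiv i p) else 0) =
      X k * (∑ i, ∑ j, z i * z j * map (eval v) (Q i j)) +
        (∑ i, C (eval v (pderiv i p)) * z i) * z k := by
  rw [Finset.mul_sum, Finset.sum_mul, ← Finset.sum_add_distrib]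
  refine Finset.sum_congr rfl fun i _ => ?_
  rw [Finset.mul_sum, ← Finset.sum_ite_eq_of_mem Finset.univ k
    (fun j => C (eval v (pderiv i p)) * z i * z j) (Finset.mem_univ k), ← Finset.sum_add_distrib]
  refine Finset.sum_congr rfl fun j _ => ?_
  rw [map_add, map_mul, map_X, apply_ite (MvPolynomial.map (eval v)), map_C, map_zero]
  split_ifs <;> ring

/-- The second-order remainder is a quadratic form in `X - v` whose coefficients `Q i j` are
polynomials in `X` over the ring of polynomials in the base point `v`. -/
theorem exists_taylor_remainder {R : Type*} [CommRing R] (p : MvPolynomial σ R) :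
    ∃ Q : σ → σ → MvPolynomial σ (MvPolynomial σ R),
      (∀ v : σ → R, p = C (eval v p) + ∑ i, C (eval v (pderiv i p)) * (X i - C (v i)) +
        ∑ i, ∑ j, (X i - C (v i)) * (X j - C (v j)) * map (eval v) (Q i j)) ∧
      ∀ (a : σ → R) (i j : σ), eval a (map (eval a) (Q i j)) + eval a (map (eval a) (Q j i)) =
        eval a (pderiv i (pderiv j p)) := by
  classical
  induction p using MvPolynomial.induction_on with
  | C c => exact ⟨0, by simp, by simp⟩
  | add p p' hp hp' =>
    obtain ⟨Q, hQ, hQ₂⟩ := hp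
    obtain ⟨Q', hQ', hQ₂'⟩ := hp'
    refine ⟨Q + Q', fun v => ?_, fun a i j => ?_⟩
    · conv_lhs => rw [hQ v, hQ' v]
      simp only [map_add, Pi.add_apply, add_mul, mul_add, Finset.sum_add_distrib]
      ring
    · simp only [Pi.add_apply, map_add, ← hQ₂, ← hQ₂']
      ring
  | mul_X p k hp =>
    obtain ⟨Q, hQ, hQ₂⟩ := hp
    refine ⟨fun i j => Q i j * X k + if k = j then C (pderiv i p) else 0, fun v => ?_,
      fun a i j => ?_⟩
    · rw [sum_pderiv_mul_X, sum_taylor_remainder_mul_X, map_mul, eval_X, map_mul]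
      conv_lhs => rw [hQ v]
      ring
    · have hsymm := hQ₂ a i j
      simp only [pderiv_mul, pderiv_X, Pi.single_apply, map_add, map_mul, eval_X, ← hsymm]
      split_ifs <;> simp <;> ring

end Taylor

/-! ### Pseudo-expectations on a small box -/

section PseudoExpectation

theorem linearMap_C_mul {σ R : Type*} [CommSemiring R] (L : MvPolynomial σ R →ₗ[R] R) (c : R)
    (p : MvPolynomial σ R) : L (C c * p) = c * L p := by
  rw [← smul_eq_C_mul, map_smul, smul_eq_mul]

theorem totalDegree_X_sub_C_le {σ R : Type*} [CommRing R] [Nontrivial R] (i : σ) (c : R) :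
    (X i - C c : MvPolynomial σ R).totalDegree ≤ 1 :=
  (totalDegree_sub_C_le _ _).trans (totalDegree_X i).le

variable {σ : Type*} {a : σ → ℝ} {r : ℝ} {D : ℕ} {L : MvPolynomial σ ℝ →ₗ[ℝ] ℝ}

/-- A pseudo-expectation for the box of radius `r` around `a`: a linear functional on polynomials
which behaves like the expectation under a probability measure on the box, as far as this can be
tested on squares of polynomials of degree at most `D`. -/
structure IsPseudoExpectation (a : σ → ℝ) (r : ℝ) (D : ℕ) (L : MvPolynomial σ ℝ →ₗ[ℝ] ℝ) :
    Prop where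
  map_one : L 1 = 1
  map_mul_self_nonneg {q : MvPolynomial σ ℝ} (hq : q.totalDegree ≤ D) : 0 ≤ L (q * q)
  map_box_mul_nonneg (i : σ) {q : MvPolynomial σ ℝ} (hq : q.totalDegree ≤ D) :
    0 ≤ L ((C (r ^ 2) - (X i - C (a i)) ^ 2) * (q * q))

/-- For the seminorm `q ↦ (L q²)^(1/2)`, multiplication by `Q`, a polynomial of degree at most `d`,
is an operator of norm at most `c` on the polynomials of degree at most `D - d`. -/
structure MulNormLE (L : MvPolynomial σ ℝ →ₗ[ℝ] ℝ) (D d : ℕ) (Q : MvPolynomial σ ℝ) (c : ℝ) :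
    Prop where
  totalDegree_le : Q.totalDegree ≤ d
  map_mul_self_le {s : MvPolynomial σ ℝ} (hs : s.totalDegree + d ≤ D) :
    L ((Q * s) * (Q * s)) ≤ c ^ 2 * L (s * s)

namespace IsPseudoExpectation

theorem map_C (hL : IsPseudoExpectation a r D L) (c : ℝ) : L (C c) = c := by
  rw [← mul_one (C c), linearMap_C_mul, hL.map_one, mul_one]

theorem sq_map_mul_le (hL : IsPseudoExpectation a r D L) {p q : MvPolynomial σ ℝ}
    (hp : p.totalDegree ≤ D) (hq : q.totalDegree ≤ D) : L (p * q) ^ 2 ≤ L (p * p) * L (q * q) := by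
  have hquad (t : ℝ) : 0 ≤ L (p * p) * (t * t) + 2 * L (p * q) * t + L (q * q) := by
    have hdeg : (C t * p + q).totalDegree ≤ D := by
      refine (totalDegree_add _ _).trans (max_le ((totalDegree_mul _ _).trans ?_) hq)
      rwa [totalDegree_C, zero_add]
    have hexp : (C t * p + q) * (C t * p + q) =
        C (t * t) * (p * p) + (C t * (p * q) + C t * (p * q)) + q * q := by
      rw [C_mul]; ring
    have hsq := hL.map_mul_self_nonneg hdeg
    rw [hexp, map_add, map_add, map_add, linearMap_C_mul, linearMap_C_mul] at hsq
    linarith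
  have hdiscrim := discrim_le_zero hquad
  rw [discrim] at hdiscrim
  linarith

end IsPseudoExpectation

namespace MulNormLE

variable {d : ℕ} {P Q : MvPolynomial σ ℝ} {b c : ℝ}

theorem mono (hL : IsPseudoExpectation a r D L) (h : MulNormLE L D d Q c) {d' : ℕ} {c' : ℝ}
    (hd : d ≤ d') (hc : 0 ≤ c) (hcc : c ≤ c') : MulNormLE L D d' Q c' where
  totalDegree_le := h.totalDegree_le.trans hd
  map_mul_self_le {s} hs := (h.map_mul_self_le (by omega)).trans <| by
    have := hL.map_mul_self_nonneg (q := s) (by omega)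
    gcongr

theorem totalDegree_mul_le (h : MulNormLE L D d Q c) {s : MvPolynomial σ ℝ}
    (hs : s.totalDegree + d ≤ D) : (Q * s).totalDegree ≤ D :=
  (totalDegree_mul _ _).trans (by linarith [h.totalDegree_le])

theorem add (hL : IsPseudoExpectation a r D L) (hP : MulNormLE L D d P b)
    (hQ : MulNormLE L D d Q c) (hb : 0 ≤ b) (hc : 0 ≤ c) : MulNormLE L D d (P + Q) (b + c) where
  totalDegree_le := (totalDegree_add _ _).trans (max_le hP.totalDegree_le hQ.totalDegree_le)
  map_mul_self_le {s} hs := by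
    have hs0 := hL.map_mul_self_nonneg (q := s) (by omega)
    have hPs := hP.map_mul_self_le hs
    have hQs := hQ.map_mul_self_le hs
    have hcross : L (P * s * (Q * s)) ≤ b * c * L (s * s) := by
      refine (le_abs_self _).trans (abs_le_of_sq_le_sq ?_ (by positivity))
      calc L (P * s * (Q * s)) ^ 2
          ≤ L (P * s * (P * s)) * L (Q * s * (Q * s)) :=
            hL.sq_map_mul_le (hP.totalDegree_mul_le hs) (hQ.totalDegree_mul_le hs)
        _ ≤ (b ^ 2 * L (s * s)) * (c ^ 2 * L (s * s)) :=
            mul_le_mul hPs hQs (hL.map_mul_self_nonneg (hQ.totalDegree_mul_le hs)) (by positivity)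
        _ = (b * c * L (s * s)) ^ 2 := by ring
    have hexp : (P + Q) * s * ((P + Q) * s) =
        P * s * (P * s) + (P * s * (Q * s) + P * s * (Q * s)) + Q * s * (Q * s) := by ring
    rw [hexp, map_add, map_add, map_add]
    linarith

theorem C_mul (hQ : MulNormLE L D d Q c) (k : ℝ) : MulNormLE L D d (C k * Q) (|k| * c) where
  totalDegree_le := (totalDegree_mul _ _).trans (by simpa using hQ.totalDegree_le)
  map_mul_self_le {s} hs := by
    have hexp : C k * Q * s * (C k * Q * s) = C (k ^ 2) * (Q * s * (Q * s)) := by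
      rw [C_pow]; ring
    rw [hexp, linearMap_C_mul, mul_pow, sq_abs, mul_assoc (k ^ 2)]
    exact mul_le_mul_of_nonneg_left (hQ.map_mul_self_le hs) (sq_nonneg k)

theorem const (L : MvPolynomial σ ℝ →ₗ[ℝ] ℝ) (D d : ℕ) (k : ℝ) : MulNormLE L D d (C k) |k| where
  totalDegree_le := by simp
  map_mul_self_le {s} _ := by
    have hexp : C k * s * (C k * s) = C (k ^ 2) * (s * s) := by
      rw [C_pow]; ring
    rw [hexp, linearMap_C_mul, sq_abs]

theorem X_sub_C_mul (hL : IsPseudoExpectation a r D L) (hQ : MulNormLE L D d Q c) (i : σ) :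
    MulNormLE L D (d + 1) ((X i - C (a i)) * Q) (r * c) where
  totalDegree_le := (totalDegree_mul _ _).trans <| by
    linarith [totalDegree_X_sub_C_le i (a i), hQ.totalDegree_le]
  map_mul_self_le {s} hs := by
    have hdeg := hQ.totalDegree_mul_le (s := s) (by omega)
    have hexp : (X i - C (a i)) * Q * s * ((X i - C (a i)) * Q * s) =
        C (r ^ 2) * (Q * s * (Q * s)) - (C (r ^ 2) - (X i - C (a i)) ^ 2) * (Q * s * (Q * s)) := by
      ring
    rw [hexp, map_sub, linearMap_C_mul, mul_pow, mul_assoc (r ^ 2)]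
    have := mul_le_mul_of_nonneg_left (hQ.map_mul_self_le (s := s) (by omega)) (sq_nonneg r)
    linarith [hL.map_box_mul_nonneg i hdeg]

theorem mul_X_sub_C (hL : IsPseudoExpectation a r D L) {q : ℝ} (hP : MulNormLE L D d (P - C q) c)
    (hc : 0 ≤ c) (hr : 0 ≤ r) (k : σ) :
    MulNormLE L D (d + 1) (P * X k - C (q * a k)) (r * c + |a k| * c + |q| * r) := by
  have hX : MulNormLE L D (d + 1) (X k - C (a k)) r := by
    simpa using (const L D d 1).X_sub_C_mul hL k
  have hsplit : P * X k - C (q * a k) =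
      (X k - C (a k)) * (P - C q) + C (a k) * (P - C q) + C q * (X k - C (a k)) := by
    rw [MvPolynomial.C_mul]; ring
  rw [hsplit]
  exact ((hP.X_sub_C_mul hL k).add hL
    ((hP.C_mul (a k)).mono hL d.le_succ (by positivity) le_rfl) (by positivity)
    (by positivity)).add hL (hX.C_mul q) (by positivity) (by positivity)

theorem abs_map_mul_le (hL : IsPseudoExpectation a r D L) (hQ : MulNormLE L D d Q c) (hc : 0 ≤ c)
    {s t : MvPolynomial σ ℝ} (hs : s.totalDegree + d ≤ D) (ht : t.totalDegree ≤ D) :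
    |L (s * t * Q)| ≤ c / 2 * (L (s * s) + L (t * t)) := by
  have hs0 := hL.map_mul_self_nonneg (q := s) (by omega)
  have ht0 := hL.map_mul_self_nonneg ht
  refine abs_le_of_sq_le_sq ?_ (by positivity)
  calc L (s * t * Q) ^ 2 = L (Q * s * t) ^ 2 := by rw [mul_rotate, mul_rotate, mul_right_comm]
    _ ≤ L (Q * s * (Q * s)) * L (t * t) := hL.sq_map_mul_le (hQ.totalDegree_mul_le hs) ht
    _ ≤ c ^ 2 * L (s * s) * L (t * t) :=
      mul_le_mul_of_nonneg_right (hQ.map_mul_self_le hs) ht0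
    _ ≤ (c / 2 * (L (s * s) + L (t * t))) ^ 2 := by
      nlinarith [mul_nonneg (sq_nonneg c) (sq_nonneg (L (s * s) - L (t * t)))]

-- Coordinates differ from those of `a` by operators of norm at most `r`, so a polynomial that
-- depends continuously on a point of the box is nearly the scalar operator of its value at `a`.
theorem exists_eventually_map_eval_sub_C [Fintype σ]
    (Q : MvPolynomial σ (MvPolynomial σ ℝ)) (a : σ → ℝ) :
    ∃ d, ∀ ε > 0, ∀ᶠ r in nhdsWithin (0 : ℝ) (Ioi 0), ∀ v ∈ closedBall a r, ∀ D L,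
      IsPseudoExpectation a r D L →
        MulNormLE L D d (map (eval v) Q - C (eval a (map (eval a) Q))) ε := by
  induction Q using MvPolynomial.induction_on with
  | C p =>
    refine ⟨0, fun ε hε => ?_⟩
    have hp : ∀ᶠ v in nhds a, |eval v p - eval a p| < ε :=
      Metric.continuousAt_iff'.1 (continuous_eval p).continuousAt ε hε
    filter_upwards [nhdsWithin_le_nhds (eventually_closedBall_subset hp)] with r hr v hv D L hL
    rw [MvPolynomial.map_C, MvPolynomial.map_C, eval_C, ← C_sub]
    exact (const L D 0 _).mono hL le_rfl (abs_nonneg _) (hr hv).le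
  | add P Q hP hQ =>
    obtain ⟨d, hd⟩ := hP
    obtain ⟨e, he⟩ := hQ
    refine ⟨max d e, fun ε hε => ?_⟩
    filter_upwards [hd _ (half_pos hε), he _ (half_pos hε)] with r hdr her v hv D L hL
    rw [map_add, map_add, map_add, C_add, add_sub_add_comm, ← add_halves ε]
    exact ((hdr v hv D L hL).mono hL (le_max_left _ _) (half_pos hε).le le_rfl).add hL
      ((her v hv D L hL).mono hL (le_max_right _ _) (half_pos hε).le le_rfl)
      (half_pos hε).le (half_pos hε).le
  | mul_X Q k hQ =>
    obtain ⟨d, hd⟩ := hQ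
    refine ⟨d + 1, fun ε hε => ?_⟩
    set q := eval a (MvPolynomial.map (eval a) Q)
    let η := ε / (1 + |a k| + |q|)
    have hη : 0 < η := by positivity
    filter_upwards [hd η hη, self_mem_nhdsWithin,
      nhdsWithin_le_nhds (eventually_le_nhds (lt_min one_pos hη))] with r hr hr0 hr' v hv D L hL
    obtain ⟨hr1, hrη⟩ := le_min_iff.1 hr'
    have hmul := (hr v hv D L hL).mul_X_sub_C hL hη.le (mem_Ioi.1 hr0).le k
    rw [map_mul, map_mul, map_mul, map_X, map_X, eval_X]
    refine hmul.mono hL le_rfl (by have := mem_Ioi.1 hr0; positivity) ?_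
    calc r * η + |a k| * η + |q| * r ≤ 1 * η + |a k| * η + |q| * η := by gcongr
      _ = ε := by simp only [η]; field_simp

end MulNormLE

/-! ### Jensen's inequality near a point of negative definite Hessian -/

section Jensen

variable {ι : Type*} [Fintype ι]

theorem sum_mul_nonneg_of_posSemidef {A M : Matrix ι ι ℝ} (hA : A.PosSemidef) (hM : M.PosSemidef) :
    0 ≤ ∑ i, ∑ j, A i j * M i j := by
  simpa [dotProduct, Matrix.mulVec] using (hA.hadamard hM).dotProduct_mulVec_nonneg 1

open scoped MatrixOrder in
theorem exists_pos_mul_trace_le_of_posDef {A : Matrix ι ι ℝ} (hA : A.PosDef) :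
    ∃ c > 0, ∀ M : Matrix ι ι ℝ, M.PosSemidef → c * M.trace ≤ ∑ i, ∑ j, A i j * M i j := by
  classical
  rcases subsingleton_or_nontrivial (Matrix ι ι ℝ) with _ | _
  · exact ⟨1, one_pos, fun M _ => by simp [Subsingleton.elim M 0]⟩
  obtain ⟨c, hc, hcA⟩ := (CFC.exists_pos_algebraMap_le_iff hA.isHermitian.isSelfAdjoint).2
    fun x hx => hA.isStrictlyPositive.spectrum_pos hx
  refine ⟨c, hc, fun M hM => ?_⟩
  have h := sum_mul_nonneg_of_posSemidef (Matrix.le_iff.1 hcA) hM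
  simpa [Matrix.algebraMap_matrix_apply, sub_mul, Matrix.trace, Finset.mul_sum] using h

end Jensen

namespace IsPseudoExpectation

theorem posSemidef_gram {ι : Type*} [Finite ι] (hL : IsPseudoExpectation a r D L)
    {z : ι → MvPolynomial σ ℝ} (hz : ∀ i, (z i).totalDegree ≤ D) :
    (Matrix.of fun i j => L (z i * z j)).PosSemidef := by
  have := Fintype.ofFinite ι
  refine Matrix.PosSemidef.of_dotProduct_mulVec_nonneg
    (Matrix.IsHermitian.ext fun i j => by simp [mul_comm]) fun x => ?_
  have hdeg : (∑ i, x i • z i).totalDegree ≤ D :=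
    totalDegree_finsetSum_le fun i _ => (totalDegree_smul_le _ _).trans (hz i)
  refine (hL.map_mul_self_nonneg hdeg).trans_eq ?_
  simp [dotProduct, Matrix.mulVec, Finset.mul_sum, mul_left_comm, mul_comm]

theorem map_X_mem_closedBall [Fintype σ] (hL : IsPseudoExpectation a r D L) (hr : 0 ≤ r)
    (hD : 1 ≤ D) : (fun i => L (X i)) ∈ closedBall a r := by
  refine (dist_pi_le_iff hr).2 fun i => ?_
  have hdeg := (totalDegree_X_sub_C_le i (a i)).trans hD
  have hCS := hL.sq_map_mul_le hdeg (q := 1) (by simp)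
  have hbox := hL.map_box_mul_nonneg i (q := 1) (by simp)
  rw [mul_one, mul_one, hL.map_one, mul_one, map_sub, hL.map_C] at hCS
  rw [mul_one, mul_one, map_sub, hL.map_C, sq (X i - C (a i))] at hbox
  exact abs_le_of_sq_le_sq (by linarith) hr

theorem sum_map_mul_le {ι : Type*} [Fintype ι] (hL : IsPseudoExpectation a r D L) {d : ℕ} {ε : ℝ}
    (hε : 0 ≤ ε) {z : ι → MvPolynomial σ ℝ} (hz : ∀ i, (z i).totalDegree + d ≤ D)
    {P : ι → ι → MvPolynomial σ ℝ} {q : ι → ι → ℝ}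
    (hP : ∀ i j, MulNormLE L D d (P i j - C (q i j)) ε) :
    ∑ i, ∑ j, L (z i * z j * P i j) ≤
      ∑ i, ∑ j, q i j * L (z i * z j) + ε * Fintype.card ι * ∑ i, L (z i * z i) := by
  have hentry (i j : ι) : L (z i * z j * P i j) ≤
      q i j * L (z i * z j) + ε / 2 * (L (z i * z i) + L (z j * z j)) := by
    have herr := (hP i j).abs_map_mul_le hL hε (hz i) (le_of_add_le_left (hz j))
    rw [mul_sub, map_sub, mul_comm _ (C _), linearMap_C_mul] at herr
    exact sub_le_iff_le_add'.1 ((le_abs_self _).trans herr)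
  refine (Finset.sum_le_sum fun i _ => Finset.sum_le_sum fun j _ => hentry i j).trans_eq ?_
  simp only [Finset.sum_add_distrib, ← Finset.mul_sum, Finset.sum_const, Finset.card_univ,
    nsmul_eq_mul]
  ring

theorem map_affine_add [Fintype σ] (hL : IsPseudoExpectation a r D L) (c : ℝ) (b : σ → ℝ)
    (p : MvPolynomial σ ℝ) :
    L (C c + ∑ i, C (b i) * (X i - C (L (X i))) + p) = c + L p := by
  simp only [map_add, map_sum, map_sub, linearMap_C_mul, hL.map_C, sub_self, mul_zero,
    Finset.sum_const_zero, add_zero]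

end IsPseudoExpectation

theorem two_mul_sum_mul_of_isSymm {ι : Type*} [Fintype ι] {q M : Matrix ι ι ℝ} (hM : M.IsSymm) :
    2 * ∑ i, ∑ j, q i j * M i j = ∑ i, ∑ j, (q i j + q j i) * M i j := by
  have hswap : ∑ i, ∑ j, q j i * M i j = ∑ i, ∑ j, q i j * M i j := by
    rw [Finset.sum_comm]
    simp only [hM.apply]
  simp only [add_mul, Finset.sum_add_distrib, hswap, two_mul]

theorem IsPseudoExpectation.map_le_eval [Fintype σ] {d : ℕ} {c ε : ℝ}
    (hL : IsPseudoExpectation a r (1 + d) L) {g : MvPolynomial σ ℝ} {v b : σ → ℝ}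
    {P : σ → σ → MvPolynomial σ ℝ} {q : σ → σ → ℝ} (hv : ∀ i, L (X i) = v i)
    (hg : g = C (eval v g) + ∑ i, C (b i) * (X i - C (v i)) +
      ∑ i, ∑ j, (X i - C (v i)) * (X j - C (v j)) * P i j)
    (hP : ∀ i j, MulNormLE L (1 + d) d (P i j - C (q i j)) ε) (hε : 0 ≤ ε)
    (hεc : ε * Fintype.card σ ≤ c)
    (hq : ∀ M : Matrix σ σ ℝ, M.PosSemidef → ∑ i, ∑ j, q i j * M i j ≤ -(c * M.trace)) :
    L g ≤ eval v g := by
  obtain rfl : (fun i => L (X i)) = v := funext hv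
  let z (i : σ) : MvPolynomial σ ℝ := X i - C (L (X i))
  let M : Matrix σ σ ℝ := Matrix.of fun i j => L (z i * z j)
  have hz (i) : (z i).totalDegree ≤ 1 := totalDegree_X_sub_C_le i _
  have hM : M.PosSemidef := hL.posSemidef_gram fun i => (hz i).trans (Nat.le_add_right 1 d)
  have hexp : L g = eval (fun i => L (X i)) g + ∑ i, ∑ j, L (z i * z j * P i j) := by
    conv_lhs => rw [hg]
    exact (hL.map_affine_add _ _ _).trans (by simp only [map_sum, z])
  have hsum : ∑ i, ∑ j, L (z i * z j * P i j) ≤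
      ∑ i, ∑ j, q i j * M i j + ε * Fintype.card σ * M.trace :=
    hL.sum_map_mul_le hε (fun i => Nat.add_le_add_right (hz i) d) hP
  have hεM := mul_le_mul_of_nonneg_right hεc hM.trace_nonneg
  linarith [hq M hM]

theorem exists_eventually_map_le_eval [Finite σ] {g : MvPolynomial σ ℝ} {a : σ → ℝ}
    (hg : (-Matrix.of fun i j => eval a (pderiv i (pderiv j g))).PosDef) :
    ∃ D, ∀ᶠ r in nhdsWithin (0 : ℝ) (Ioi 0), ∀ L, IsPseudoExpectation a r D L →
      L g ≤ eval (fun i => L (X i)) g := by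
  have := Fintype.ofFinite σ
  obtain ⟨Q, hQ, hQH⟩ := exists_taylor_remainder g
  obtain ⟨c, hc, hcH⟩ := exists_pos_mul_trace_le_of_posDef hg
  have hquad (M : Matrix σ σ ℝ) (hM : M.PosSemidef) :
      ∑ i, ∑ j, eval a (MvPolynomial.map (eval a) (Q i j)) * M i j ≤ -(c / 2 * M.trace) := by
    have hsymm := two_mul_sum_mul_of_isSymm
      (q := fun i j => eval a (MvPolynomial.map (eval a) (Q i j)))
      (Matrix.isHermitian_iff_isSymm.1 hM.isHermitian)
    have hHess := hcH M hM
    simp only [hQH] at hsymm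
    simp only [Matrix.neg_apply, Matrix.of_apply, neg_mul, Finset.sum_neg_distrib] at hHess
    linarith
  choose d hd using fun i j => MulNormLE.exists_eventually_map_eval_sub_C (Q i j) a
  obtain ⟨D, hD⟩ := Finite.bddAbove_range fun p : σ × σ => d p.1 p.2
  let ε := c / 2 / (Fintype.card σ + 1)
  have hε : 0 < ε := by positivity
  have hεc : ε * Fintype.card σ ≤ c / 2 := by
    have hcard : ε * (Fintype.card σ + 1) = c / 2 := div_mul_cancel₀ _ (by positivity)
    linarith
  refine ⟨1 + D, ?_⟩
  filter_upwards [eventually_all.2 fun i => eventually_all.2 fun j => hd i j ε hε,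
    self_mem_nhdsWithin] with r hr hr0 L hL
  have hv := hL.map_X_mem_closedBall (mem_Ioi.1 hr0).le (Nat.le_add_right 1 D)
  exact hL.map_le_eval (fun _ => rfl) (hQ _)
    (fun i j => (hr i j _ hv _ L hL).mono hL (hD ⟨(i, j), rfl⟩) hε.le le_rfl) hε.le hεc hquad

theorem IsPseudoExpectation.mono (hL : IsPseudoExpectation a r D L) {D' : ℕ} (h : D' ≤ D) :
    IsPseudoExpectation a r D' L where
  map_one := hL.map_one
  map_mul_self_nonneg hq := hL.map_mul_self_nonneg (hq.trans h)
  map_box_mul_nonneg i _ hq := hL.map_box_mul_nonneg i (hq.trans h)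

theorem isPseudoExpectation_aeval [Fintype σ] {x : σ → ℝ} (hr : 0 ≤ r) (hx : x ∈ closedBall a r)
    (D : ℕ) : IsPseudoExpectation a r D (aeval x).toLinearMap where
  map_one := by simp
  map_mul_self_nonneg {q} _ := by simpa using mul_self_nonneg (eval x q)
  map_box_mul_nonneg i {q} _ := by
    have hbox : (x i - a i) ^ 2 ≤ r ^ 2 := sq_le_sq' (abs_le.1 ((dist_pi_le_iff hr).1 hx i)).1
      (abs_le.1 ((dist_pi_le_iff hr).1 hx i)).2
    simpa [aeval_eq_eval] using mul_nonneg (sub_nonneg.2 hbox) (mul_self_nonneg (eval x q))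

end PseudoExpectation

/-! ### Superlevel sets near a point of negative definite Hessian -/

section SmallBox

variable {σ : Type}

theorem isSpectrahedron_setOf_map_mul_self_nonneg [Finite σ] (w : MvPolynomial σ ℝ) (D : ℕ) :
    IsSpectrahedron {L : MvPolynomial σ ℝ →ₗ[ℝ] ℝ |
      ∀ q : MvPolynomial σ ℝ, q.totalDegree ≤ D → 0 ≤ L (w * (q * q))} := by
  let E := restrictTotalDegree σ ℝ D
  let form (L : MvPolynomial σ ℝ →ₗ[ℝ] ℝ) : QuadraticForm ℝ E :=
    (L ∘ₗ LinearMap.mulLeft ℝ w).compQuadraticMap (QuadraticMap.sq.comp E.subtype)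
  refine ⟨E, inferInstance, inferInstance, inferInstance, 0,
    { toFun := form
      map_add' := fun L M => rfl
      map_smul' := fun c L => rfl }, ?_⟩
  ext L
  simp only [mem_ofPred_eq, zero_add, Subtype.forall, E, mem_restrictTotalDegree]
  rfl

theorem isSpectrahedron_setOf_isPseudoExpectation [Finite σ] (a : σ → ℝ) (r : ℝ) (D : ℕ) :
    IsSpectrahedron {L | IsPseudoExpectation a r D L} := by
  convert ((IsSpectrahedron.setOf_eq (LinearMap.applyₗ (1 : MvPolynomial σ ℝ)) (1 : ℝ)).inter
    (isSpectrahedron_setOf_map_mul_self_nonneg 1 D)).inter (IsSpectrahedron.iInter fun i =>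
      isSpectrahedron_setOf_map_mul_self_nonneg (C (r ^ 2) - (X i - C (a i)) ^ 2) D) using 1
  ext L
  simp only [mem_ofPred_eq, mem_inter_iff, mem_iInter, one_mul, LinearMap.applyₗ_apply_apply]
  exact ⟨fun h => ⟨⟨h.1, fun _ => h.2⟩, fun i _ => h.3 i⟩,
    fun h => ⟨h.1.1, h.1.2 _, fun i => h.2 i _⟩⟩

theorem eventually_isSpectrahedralShadow_closedBall_inter [Fintype σ] {g : MvPolynomial σ ℝ}
    {a : σ → ℝ} (hg : (-Matrix.of fun i j => eval a (pderiv i (pderiv j g))).PosDef) :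
    ∀ᶠ r in nhdsWithin (0 : ℝ) (Ioi 0),
      IsSpectrahedralShadow (closedBall a r ∩ {x | 0 ≤ eval x g}) := by
  obtain ⟨D, hD⟩ := exists_eventually_map_le_eval hg
  filter_upwards [hD, self_mem_nhdsWithin] with r hr hr0
  rw [mem_Ioi] at hr0
  let expectX : (MvPolynomial σ ℝ →ₗ[ℝ] ℝ) →ₗ[ℝ] σ → ℝ :=
    LinearMap.pi fun i => LinearMap.applyₗ (X i)
  convert ((isSpectrahedron_setOf_isPseudoExpectation a r (D + 1)).inter
    (IsSpectrahedron.halfspace 0 (LinearMap.applyₗ g))).isSpectrahedralShadow.image expectX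
  refine Subset.antisymm (fun x ⟨hx, hgx⟩ => ?_) ?_
  · refine ⟨(aeval x).toLinearMap, ⟨isPseudoExpectation_aeval hr0.le hx _, ?_⟩, ?_⟩
    · simpa [aeval_eq_eval] using hgx
    · ext i; simp [expectX]
  · rintro _ ⟨L, ⟨hL, hgL⟩, rfl⟩
    refine ⟨hL.map_X_mem_closedBall hr0.le (Nat.le_add_left 1 D), ?_⟩
    refine le_trans ?_ (hr L (hL.mono D.le_succ))
    simpa using hgL

end SmallBox

/-! ### Polynomials with negative definite Hessian on a convex set -/

section Concavity

theorem hasDerivAt_eval {σ : Type*} [Fintype σ] {f : ℝ → σ → ℝ} {f' : σ → ℝ} {t : ℝ}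
    (hf : ∀ i, HasDerivAt (fun s => f s i) (f' i) t) (p : MvPolynomial σ ℝ) :
    HasDerivAt (fun s => eval (f s) p) (∑ i, eval (f t) (pderiv i p) * f' i) t := by
  classical
  induction p using MvPolynomial.induction_on with
  | C c => simpa using hasDerivAt_const t c
  | add p q hp hq => simpa [add_mul, Finset.sum_add_distrib] using hp.fun_add hq
  | mul_X p k hp =>
    have hderiv : ∑ i, eval (f t) (pderiv i (p * X k)) * f' i =
        (∑ i, eval (f t) (pderiv i p) * f' i) * f t k + eval (f t) p * f' k := by
      simp only [pderiv_mul, pderiv_X, Pi.single_apply, map_add, map_mul, eval_X, add_mul,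
        Finset.sum_add_distrib, apply_ite (eval (f t)), map_zero, mul_ite, mul_one,
        mul_zero, ite_mul, zero_mul, Finset.sum_ite_eq, Finset.mem_univ, if_true, Finset.sum_mul,
        mul_right_comm]
    simpa only [hderiv, map_mul, eval_X] using hp.fun_mul (hf k)

theorem continuous_peval {n : ℕ} (p : MvPolynomial (Fin n) ℝ) : Continuous (peval p) :=
  p.continuous_eval.comp (PiLp.continuous_ofLp 2 _)

variable {n : ℕ} {g : MvPolynomial (Fin n) ℝ} {s : Set (Rn n)} {v w : Rn n}

theorem hasDerivAt_peval_lineMap (p : MvPolynomial (Fin n) ℝ) (v w : Rn n) (t : ℝ) :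
    HasDerivAt (fun t : ℝ => peval p (AffineMap.lineMap v w t))
      (∑ i, pgrad p (AffineMap.lineMap v w t) i * (w - v) i) t := by
  refine hasDerivAt_eval (f := fun t => (AffineMap.lineMap v w t : Rn n)) (fun i => ?_) p
  simpa [AffineMap.lineMap_apply] using
    ((hasDerivAt_id' t).mul_const (w i - v i)).add_const (v i)

theorem strictConcaveOn_peval_lineMap (hs : Convex ℝ s) (hg : ∀ x ∈ s, (-phess g x).PosDef)
    (hv : v ∈ s) (hw : w ∈ s) (hvw : v ≠ w) :
    StrictConcaveOn ℝ (Icc 0 1) fun t : ℝ => peval g (AffineMap.lineMap v w t) := by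
  have hderiv := hasDerivAt_peval_lineMap g v w
  have hderiv₂ (t : ℝ) : HasDerivAt (fun t => ∑ i, pgrad g (AffineMap.lineMap v w t) i * (w - v) i)
      (∑ i, (∑ j, phess g (AffineMap.lineMap v w t) j i * (w - v) j) * (w - v) i) t :=
    HasDerivAt.fun_sum fun i _ => (hasDerivAt_peval_lineMap (pderiv i g) v w t).mul_const _
  refine strictConcaveOn_of_deriv2_neg' (convex_Icc 0 1)
    (fun t _ => (hderiv t).continuousAt.continuousWithinAt) fun t ht => ?_
  rw [Function.iterate_succ_apply, funext fun t => (hderiv t).deriv, Function.iterate_one,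
    (hderiv₂ t).deriv]
  have hne : (w - v).ofLp ≠ 0 := fun h => hvw.symm (sub_eq_zero.1 (WithLp.ofLp_injective 2 h))
  have hpos := (hg _ (hs.lineMap_mem hv hw ht)).dotProduct_mulVec_pos hne
  rw [Matrix.neg_mulVec, dotProduct_neg, Left.neg_pos_iff, star_trivial,
    Matrix.dotProduct_mulVec] at hpos
  simpa only [dotProduct, Matrix.vecMul, mul_comm ((w - v).ofLp _)] using hpos

theorem strictConcaveOn_peval (hs : Convex ℝ s) (hg : ∀ x ∈ s, (-phess g x).PosDef) :
    StrictConcaveOn ℝ s (peval g) := by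
  refine ⟨hs, fun v hv w hw hvw a b ha hb hab => ?_⟩
  obtain rfl : a = 1 - b := eq_sub_of_add_eq hab
  have h := (strictConcaveOn_peval_lineMap hs hg hv hw hvw).2 (x := 0) (y := 1) (by simp) (by simp)
    zero_ne_one ha hb hab
  simpa [AffineMap.lineMap_apply_module] using h

theorem peval_lt_peval_add (hs : Convex ℝ s) (hg : ∀ x ∈ s, (-phess g x).PosDef)
    (hv : v ∈ s) (hw : w ∈ s) (hvw : v ≠ w) :
    peval g w < peval g v + ∑ i, pgrad g v i * (w i - v i) := by
  have h := (strictConcaveOn_peval_lineMap hs hg hv hw hvw).slope_lt_of_hasDerivAt (x := 0) (y := 1)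
    (by simp) (by simp) one_pos (hasDerivAt_peval_lineMap g v w 0)
  simpa [slope_def_field, sub_lt_iff_lt_add'] using h

end Concavity

/-! ### Convex hulls of compact sets -/

section ConvexGeometry

variable {E : Type*} [NormedAddCommGroup E] [NormedSpace ℝ E] {P : Set E}

theorem isCompact_convexHull [FiniteDimensional ℝ E] (hP : IsCompact P) :
    IsCompact (convexHull ℝ P) := by
  have heq : convexHull ℝ P = ⋃ k : Fin (Module.finrank ℝ E + 2),
      (fun q : (Fin k → ℝ) × (Fin k → E) => ∑ i, q.1 i • q.2 i) ''
        (stdSimplex ℝ (Fin k) ×ˢ Set.univ.pi fun _ => P) := by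
    refine Subset.antisymm (fun x hx => ?_) (iUnion_subset fun k => ?_)
    · obtain ⟨ι, _, z, w, hz, hind, hw, hw1, hx⟩ := eq_pos_convex_span_of_mem_convexHull hx
      have hcard := hind.card_le_finrank_succ.trans
        (Nat.succ_le_succ (Submodule.finrank_le (vectorSpan ℝ (range z))))
      let e := (Fintype.equivFin ι).symm
      refine mem_iUnion.2 ⟨⟨Fintype.card ι, Nat.lt_succ_of_le hcard⟩, (w ∘ e, z ∘ e),
        ⟨⟨fun i => (hw _).le, ?_⟩, fun i _ => hz ⟨_, rfl⟩⟩, ?_⟩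
      · exact (e.sum_comp w).trans hw1
      · exact (e.sum_comp fun i => w i • z i).trans hx
    · rintro _ ⟨q, ⟨hq, hqP⟩, rfl⟩
      exact (convex_convexHull ℝ P).sum_mem (fun i _ => hq.1 i) hq.2
        fun i _ => subset_convexHull ℝ P (hqP i (mem_univ i))
  rw [heq]
  exact isCompact_iUnion fun k =>
    ((isCompact_stdSimplex ℝ (Fin k)).prod (isCompact_univ_pi fun _ => hP)).image (by fun_prop)

theorem mem_convexHull_setOf_eq_of_isMinOn {φ : E →L[ℝ] ℝ} {v : E} (hv : v ∈ convexHull ℝ P)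
    (hmin : IsMinOn φ P v) : v ∈ convexHull ℝ {x ∈ P | φ x = φ v} := by
  obtain ⟨ι, _, z, w, hz, -, hw, hw1, hzv⟩ := eq_pos_convex_span_of_mem_convexHull hv
  have hsum : ∑ i, w i * φ v = ∑ i, w i * φ (z i) := by
    rw [← Finset.sum_mul, hw1, one_mul, ← hzv]
    simp
  have heq := (Finset.sum_eq_sum_iff_of_le fun i _ =>
    mul_le_mul_of_nonneg_left (hmin (hz ⟨i, rfl⟩)) (hw i).le).1 hsum
  rw [← hzv]
  refine (convex_convexHull ℝ _).sum_mem (fun i _ => (hw i).le) hw1 fun i _ =>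
    subset_convexHull ℝ _ ⟨hz ⟨i, rfl⟩, ?_⟩
  rw [hzv]
  exact (mul_left_cancel₀ (hw i).ne' (heq i (Finset.mem_univ i))).symm

theorem mem_of_mem_convexHull_of_isMinOn {φ : E →L[ℝ] ℝ} {v : E}
    (huniq : {x ∈ P | IsMinOn φ P x}.Subsingleton) (hv : v ∈ convexHull ℝ P)
    (hmin : IsMinOn φ P v) : v ∈ P := by
  have hsub : {x ∈ P | φ x = φ v} ⊆ {x ∈ P | IsMinOn φ P x} :=
    fun x hx => ⟨hx.1, fun y hy => hx.2.trans_le (hmin hy)⟩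
  have hface := mem_convexHull_setOf_eq_of_isMinOn hv hmin
  rw [((huniq.anti hsub).convex).convexHull_eq] at hface
  exact hface.1

theorem interior_convexHull_nonempty [FiniteDimensional ℝ E] (hne : P.Nonempty)
    (h : ∀ φ : E →L[ℝ] ℝ, φ ≠ 0 → ∃ x ∈ P, ∃ y ∈ P, φ x ≠ φ y) :
    (interior (convexHull ℝ P)).Nonempty := by
  rw [interior_convexHull_nonempty_iff_affineSpan_eq_top,
    ← AffineSubspace.direction_eq_top_iff_of_nonempty ((affineSpan_nonempty ℝ).2 hne)]
  by_contra hdir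
  obtain ⟨φ, hφ, hker⟩ := Submodule.exists_le_ker_of_lt_top _ (lt_top_iff_ne_top.2 hdir)
  obtain ⟨x, hx, y, hy, hxy⟩ := h φ.toContinuousLinearMap (by simpa using hφ)
  have hvsub := hker (AffineSubspace.vsub_mem_direction (subset_affineSpan ℝ P hx)
    (subset_affineSpan ℝ P hy))
  exact hxy (by simpa [sub_eq_zero] using hvsub)

theorem exists_mem_openSegment_inter_frontier {C : Set E} (hC : IsClosed C) {x y : E}
    (hx : x ∈ interior C) (hy : y ∉ C) : ∃ v ∈ openSegment ℝ x y, v ∈ frontier C := by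
  obtain ⟨v, hv, hvC⟩ : (segment ℝ x y ∩ frontier C).Nonempty := by
    rw [hC.frontier_eq]
    by_contra hcon
    have hcover : segment ℝ x y ⊆ interior C ∪ Cᶜ := fun z hz =>
      or_iff_not_imp_left.2 fun hzi hzC => hcon ⟨z, hz, hzC, hzi⟩
    obtain ⟨z, -, hz, hzC⟩ := (convex_segment x y).isPreconnected _ _ isOpen_interior
      hC.isOpen_compl hcover ⟨x, left_mem_segment ℝ x y, hx⟩ ⟨y, right_mem_segment ℝ x y, hy⟩
    exact hzC (interior_subset hz)
  rw [hC.frontier_eq] at hvC ⊢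
  refine ⟨v, mem_openSegment_of_ne_left_right ?_ ?_ hv, hvC⟩
  · rintro rfl
    exact hvC.2 hx
  · rintro rfl
    exact hy hvC.1

/-- Leaving `convexHull ℝ P` along a segment from an interior point, one crosses the frontier at a
point `v` where some `G i` vanishes; strict concavity forbids `G i ≥ 0` beyond `v`. -/
theorem convexHull_eq_setOf_forall_nonneg [FiniteDimensional ℝ E] {ι : Type*} {B : Set E}
    {G : ι → E → ℝ} (hP : IsCompact P) (hPn : P.Nontrivial) (hPB : P ⊆ B) (hB : Convex ℝ B)
    (hG : ∀ i, StrictConcaveOn ℝ B (G i)) (hGP : ∀ i, ∀ x ∈ P, 0 ≤ G i x)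
    (huniq : ∀ φ : E →L[ℝ] ℝ, φ ≠ 0 → {x ∈ P | IsMinOn φ P x}.Subsingleton)
    (hactive : ∀ φ : E →L[ℝ] ℝ, φ ≠ 0 → ∀ v ∈ P, IsMinOn φ P v → ∃ i, G i v = 0) :
    convexHull ℝ P = {x ∈ B | ∀ i, 0 ≤ G i x} := by
  have hsub : convexHull ℝ P ⊆ {x ∈ B | ∀ i, 0 ≤ G i x} := by
    refine fun x hx => ⟨convexHull_min hPB hB hx, fun i => ?_⟩
    have hGi : P ⊆ {y ∈ B | 0 ≤ G i y} := fun y hy => ⟨hPB hy, hGP i y hy⟩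
    exact (convexHull_min hGi ((hG i).concaveOn.convex_ge 0) hx).2
  refine hsub.antisymm fun y ⟨hyB, hyG⟩ => ?_
  by_contra hy
  obtain ⟨x, hx⟩ : (interior (convexHull ℝ P)).Nonempty := by
    refine interior_convexHull_nonempty hPn.nonempty fun φ hφ => ?_
    by_contra! hconst
    exact hPn.not_subsingleton fun p hp q hq => huniq φ hφ
      ⟨hp, fun z hz => (hconst p hp z hz).le⟩ ⟨hq, fun z hz => (hconst q hq z hz).le⟩
  have hclosed := (isCompact_convexHull hP).isClosed
  obtain ⟨v, hv, hvC⟩ := exists_mem_openSegment_inter_frontier hclosed hx hy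
  rw [hclosed.frontier_eq] at hvC
  obtain ⟨φ, hφ, hφv⟩ := geometric_hahn_banach_of_nonempty_interior_point
    (convex_convexHull ℝ P) hvC.2 ⟨x, hx⟩
  have hmin : IsMinOn (-φ) P v := fun p hp => neg_le_neg (hφv p (subset_convexHull ℝ P hp))
  have hvP := mem_of_mem_convexHull_of_isMinOn (huniq _ (neg_ne_zero.2 hφ)) hvC.1 hmin
  obtain ⟨i, hi⟩ := hactive _ (neg_ne_zero.2 hφ) v hvP hmin
  obtain ⟨hxB, hxG⟩ := hsub (interior_subset hx)
  have hxy : x ≠ y := fun h => hy (h ▸ interior_subset hx)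
  have hpos : min (G i x) (G i y) < G i v := (hG i).lt_on_openSegment hxB hyB hxy hv
  exact absurd hpos (hi ▸ not_lt.2 (le_min (hxG i) (hyG i)))

theorem convexHull_eq_of_forall_exists_isMinOn {R T : Set E} (hT : T.Nontrivial) (hRT : R ⊆ T)
    (hR : IsClosed (convexHull ℝ R))
    (hmin : ∀ φ : E →L[ℝ] ℝ, φ ≠ 0 → ∃ u ∈ R, IsMinOn φ T u) :
    convexHull ℝ T = convexHull ℝ R := by
  refine (convexHull_min (fun x hx => ?_) (convex_convexHull ℝ R)).antisymm (convexHull_mono hRT)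
  by_contra hxR
  obtain ⟨φ, s, hφx, hφR⟩ := geometric_hahn_banach_point_closed (convex_convexHull ℝ R) hR hxR
  have hlt : ∀ u ∈ R, φ x < φ u := fun u hu => hφx.trans (hφR u (subset_convexHull ℝ R hu))
  obtain ⟨y, -, hyx⟩ := hT.exists_ne x
  obtain ⟨ψ, hψ⟩ := geometric_hahn_banach_point_point hyx
  obtain ⟨u, hu, -⟩ := hmin ψ (by rintro rfl; exact lt_irrefl _ hψ)
  obtain ⟨v, hv, hvmin⟩ := hmin φ (by rintro rfl; exact lt_irrefl _ (hlt u hu))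
  exact (hlt v hv).not_ge (hvmin hx)

end ConvexGeometry

/-! ### Convex sets cut out by strictly concave polynomials -/

theorem isSpectrahedralShadow_setOf_peval_nonneg {n : ℕ} {ι : Type*} [Finite ι] [Nonempty ι]
    {G : ι → MvPolynomial (Fin n) ℝ} (hc : IsCompact {x | ∀ i, 0 ≤ peval (G i) x})
    (hconv : Convex ℝ {x | ∀ i, 0 ≤ peval (G i) x})
    (hG : ∀ i, ∀ x : Rn n, (∀ j, 0 ≤ peval (G j) x) → (-phess (G i) x).PosDef) :
    IsSpectrahedralShadow {x | ∀ i, 0 ≤ peval (G i) x} := by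
  set K := {x : Rn n | ∀ i, 0 ≤ peval (G i) x} with hK
  let coord : Rn n →ₗ[ℝ] Fin n → ℝ := (WithLp.linearEquiv 2 ℝ (Fin n → ℝ)).toLinearMap
  have hcont : Continuous coord := PiLp.continuous_ofLp 2 _
  have hlocal : ∀ a ∈ K, ∃ R ⊆ K, IsClosed R ∧ R ∈ nhdsWithin a K ∧
      IsSpectrahedralShadow (convexHull ℝ R) := by
    intro a ha
    obtain ⟨r, hr, hr0⟩ := ((eventually_all.2 fun i =>
      eventually_isSpectrahedralShadow_closedBall_inter (hG i a ha)).and self_mem_nhdsWithin).exists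
    have hpiece : K ∩ coord ⁻¹' closedBall (coord a) r =
        ⋂ i, coord ⁻¹' (closedBall (coord a) r ∩ {x | 0 ≤ eval x (G i)}) := by
      rw [← preimage_iInter, ← inter_iInter, preimage_inter, inter_comm, hK, ofPred_forall,
        preimage_iInter]
      rfl
    have hshadow : IsSpectrahedralShadow (K ∩ coord ⁻¹' closedBall (coord a) r) :=
      hpiece ▸ IsSpectrahedralShadow.iInter fun i => (hr i).comap coord
    exact ⟨_, inter_subset_left, hc.isClosed.inter (isClosed_closedBall.preimage hcont),
      inter_mem_nhdsWithin K (hcont.continuousAt.preimage_mem_nhds (closedBall_mem_nhds _ hr0)),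
      hshadow.convex.convexHull_eq.symm ▸ hshadow⟩
  obtain ⟨R, hRK, hKR, -, hR⟩ :=
    IsSpectrahedralShadow.exists_superset_convexHull_of_forall_nhdsWithin hc hc.isBounded hlocal
  rwa [hRK.antisymm hKR, hconv.convexHull_eq] at hR

/-! ### Lagrange certificates and the PDLH condition -/

section Certificates

variable {n : ℕ}

theorem sum_mul_eq_inner (l x : Rn n) : ∑ i, l i * x i = inner ℝ l x := by
  simp only [PiLp.inner_apply, RCLike.inner_apply, conj_trivial, mul_comm]

theorem exists_norm_eq_one_sum_mul_eq {φ : Rn n →L[ℝ] ℝ} (hφ : φ ≠ 0) :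
    ∃ l : Rn n, ‖l‖ = 1 ∧ ∃ c > 0, ∀ x : Rn n, ∑ i, l i * x i = c * φ x := by
  set w := (InnerProductSpace.toDual ℝ (Rn n)).symm φ with hw
  have hw0 : w ≠ 0 := by simpa [hw] using hφ
  refine ⟨‖w‖⁻¹ • w, norm_smul_inv_norm hw0, ‖w‖⁻¹, inv_pos.2 (norm_pos_iff.2 hw0), fun x => ?_⟩
  rw [sum_mul_eq_inner, real_inner_smul_left, hw, InnerProductSpace.toDual_symm_apply]

theorem peval_ballPoly (u : Rn n) (δ : ℝ) (x : Rn n) :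
    peval (ballPoly u δ) x = δ ^ 2 - ‖x - u‖ ^ 2 := by
  simp [peval, ballPoly, map_sum, EuclideanSpace.norm_sq_eq]

theorem peval_ballPoly_nonneg_iff {u x : Rn n} {δ : ℝ} (hδ : 0 ≤ δ) :
    0 ≤ peval (ballPoly u δ) x ↔ x ∈ closedBall u δ := by
  rw [peval_ballPoly, mem_closedBall, dist_eq_norm, sub_nonneg, sq_le_sq₀ (norm_nonneg _) hδ]

theorem pderiv_ballPoly (u : Rn n) (δ : ℝ) (j : Fin n) :
    pderiv j (ballPoly u δ) = -(C 2 * (X j - C (u j))) := by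
  rw [map_ofNat C 2]
  simp [ballPoly, map_sum, pderiv_X, Pi.single_apply]

theorem posDef_neg_phess_ballPoly (u : Rn n) (δ : ℝ) (x : Rn n) :
    (-phess (ballPoly u δ) x).PosDef := by
  have h : -phess (ballPoly u δ) x = (2 : ℝ) • (1 : Matrix (Fin n) (Fin n) ℝ) := by
    ext i j
    rcases eq_or_ne i j with rfl | hij
    · simp [phess, pderiv_ballPoly]
    · simp [phess, pderiv_ballPoly, hij, hij.symm]
  exact h ▸ Matrix.PosDef.one.smul two_pos

/-- The Lagrangian `∑ λᵢ fᵢ + ∑ μⱼ hⱼ` without its objective term. -/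
def lagrangian {m p : ℕ} (f : Fin m → MvPolynomial (Fin n) ℝ) (h : Fin p → MvPolynomial (Fin n) ℝ)
    (lam : Fin m → ℝ) (mu : Fin p → ℝ) : MvPolynomial (Fin n) ℝ :=
  ∑ i, C (lam i) * f i + ∑ j, C (mu j) * h j

section Lagrangian

variable {m p : ℕ} (f : Fin m → MvPolynomial (Fin n) ℝ) (h : Fin p → MvPolynomial (Fin n) ℝ)
  (lam : Fin m → ℝ) (mu : Fin p → ℝ) (x : Rn n)

theorem peval_lagrangian : peval (lagrangian f h lam mu) x =
    ∑ i, lam i * peval (f i) x + ∑ j, mu j * peval (h j) x := by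
  simp [peval, lagrangian, map_sum]

theorem pgrad_lagrangian (k : Fin n) : pgrad (lagrangian f h lam mu) x k =
    ∑ i, lam i * pgrad (f i) x k + ∑ j, mu j * pgrad (h j) x k := by
  simp [pgrad, lagrangian, map_sum]

theorem neg_phess_lagrangian : -phess (lagrangian f h lam mu) x = Matrix.of fun k k' =>
    -(∑ i, lam i * phess (f i) x k k') - ∑ j, mu j * phess (h j) x k k' := by
  ext k k'
  simp [phess, lagrangian, map_sum, -neg_add_rev, neg_add']

end Lagrangian

/-- `g` certifies that `v` minimizes `φ` over `P`: it is strictly concave on `B ⊇ P` and nonnegative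
on `P`, and vanishes at `v` with gradient a positive multiple of `φ`. -/
structure IsLagrangeCertificate (B P : Set (Rn n)) (φ : Rn n →L[ℝ] ℝ) (v : Rn n)
    (g : MvPolynomial (Fin n) ℝ) : Prop where
  posDef_neg_phess : ∀ x ∈ B, (-phess g x).PosDef
  nonneg : ∀ x ∈ P, 0 ≤ peval g x
  peval_eq_zero : peval g v = 0
  exists_pgrad : ∃ c > 0, ∀ d : Rn n, ∑ i, pgrad g v i * d i = c * φ d

theorem IsLagrangeCertificate.lt_apply {B P : Set (Rn n)} {φ : Rn n →L[ℝ] ℝ} {v w : Rn n}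
    {g : MvPolynomial (Fin n) ℝ} (hg : IsLagrangeCertificate B P φ v g) (hB : Convex ℝ B)
    (hPB : P ⊆ B) (hv : v ∈ P) (hw : w ∈ P) (hvw : v ≠ w) : φ v < φ w := by
  obtain ⟨c, hc, hgrad⟩ := hg.exists_pgrad
  have hlt := peval_lt_peval_add hB hg.posDef_neg_phess (hPB hv) (hPB hw) hvw
  have hpos : 0 < c * φ (w - v) := by
    rw [← hgrad]
    exact (hg.nonneg w hw).trans_lt (by simpa [hg.peval_eq_zero] using hlt)
  simpa using pos_of_mul_pos_right hpos hc.le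

theorem isSpectrahedralShadow_convexHull_of_posDef {P : Set (Rn n)} {u : Rn n} {δ : ℝ}
    (hδ : 0 ≤ δ) (hP : IsCompact P) (hPB : P ⊆ closedBall u δ) {ι : Type*} [Finite ι]
    {g : ι → MvPolynomial (Fin n) ℝ} (hgdef : ∀ i, ∀ x ∈ closedBall u δ, (-phess (g i) x).PosDef)
    (hgnonneg : ∀ i, ∀ x ∈ P, 0 ≤ peval (g i) x)
    (huniq : ∀ φ : Rn n →L[ℝ] ℝ, φ ≠ 0 → {x ∈ P | IsMinOn φ P x}.Subsingleton)
    (hactive : ∀ φ : Rn n →L[ℝ] ℝ, φ ≠ 0 → ∀ v ∈ P, IsMinOn φ P v → ∃ i, peval (g i) v = 0) :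
    IsSpectrahedralShadow (convexHull ℝ P) := by
  rcases P.subsingleton_or_nontrivial with hsub | hPn
  · rw [hsub.convex.convexHull_eq]
    exact .of_subsingleton hsub
  have hB : Convex ℝ (closedBall u δ) := convex_closedBall u δ
  let G : Option ι → MvPolynomial (Fin n) ℝ := fun o => o.elim (ballPoly u δ) g
  have hGdef : ∀ o, ∀ x ∈ closedBall u δ, (-phess (G o) x).PosDef
    | none, x, _ => posDef_neg_phess_ballPoly u δ x
    | some i, x, hx => hgdef i x hx
  have hGnonneg : ∀ o, ∀ x ∈ P, 0 ≤ peval (G o) x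
    | none, x, hx => (peval_ballPoly_nonneg_iff hδ).2 (hPB hx)
    | some i, x, hx => hgnonneg i x hx
  have hball (x : Rn n) (hx : ∀ o, 0 ≤ peval (G o) x) : x ∈ closedBall u δ :=
    (peval_ballPoly_nonneg_iff hδ).1 (hx none)
  have hhull : convexHull ℝ P = {x | ∀ o, 0 ≤ peval (G o) x} :=
    (convexHull_eq_setOf_forall_nonneg hP hPn hPB hB (fun o => strictConcaveOn_peval hB (hGdef o))
      hGnonneg huniq fun φ hφ v hv hvmin => (hactive φ hφ v hv hvmin).imp' some fun _ => id).trans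
      (Set.ext fun x => and_iff_right_of_imp (hball x))
  rw [hhull]
  exact isSpectrahedralShadow_setOf_peval_nonneg (hhull ▸ isCompact_convexHull hP)
    (hhull ▸ convex_convexHull ℝ P) fun o x hx => hGdef o x (hball x hx)

/-- The type `α` records which of finitely many constraints are active; one certificate per value
of `active` then suffices to describe the hull. -/
theorem isSpectrahedralShadow_convexHull_of_certificates {P : Set (Rn n)} {u : Rn n} {δ : ℝ}
    (hδ : 0 ≤ δ) (hP : IsCompact P) (hPB : P ⊆ closedBall u δ) {α : Type*} [Finite α]
    (active : Rn n → α)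
    (hcert : ∀ φ : Rn n →L[ℝ] ℝ, φ ≠ 0 → ∀ v ∈ P, IsMinOn φ P v →
      ∃ g, IsLagrangeCertificate (closedBall u δ) P φ v g ∧
        ∀ w ∈ P, active w = active v → peval g w = 0) :
    IsSpectrahedralShadow (convexHull ℝ P) := by
  let ι := {a : α // ∃ g : MvPolynomial (Fin n) ℝ, (∀ x ∈ closedBall u δ, (-phess g x).PosDef) ∧
    (∀ x ∈ P, 0 ≤ peval g x) ∧ ∀ w ∈ P, active w = a → peval g w = 0}
  choose g hgdef hgnonneg hgzero using fun a : ι => a.2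
  refine isSpectrahedralShadow_convexHull_of_posDef hδ hP hPB hgdef hgnonneg
    (fun φ hφ => ?_) fun φ hφ v hv hvmin => ?_
  · rintro v ⟨hv, hvmin⟩ w ⟨hw, hwmin⟩
    obtain ⟨g, hg, -⟩ := hcert φ hφ v hv hvmin
    by_contra hvw
    exact (hg.lt_apply (convex_closedBall u δ) hPB hv hw hvw).not_ge (hwmin hv)
  · obtain ⟨g, hg, hgzero'⟩ := hcert φ hφ v hv hvmin
    exact ⟨⟨active v, g, hg.posDef_neg_phess, hg.nonneg, hgzero'⟩, hgzero _ v hv rfl⟩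

variable {m₁ m₂ : ℕ} {f : Fin m₁ → MvPolynomial (Fin n) ℝ} {h : Fin m₂ → MvPolynomial (Fin n) ℝ}
  {T : Set (Rn n)} {u : Rn n} {δ : ℝ}

theorem peval_extFamily_nonneg (hδ : 0 ≤ δ) {x : Rn n} (hx : ∀ j, 0 ≤ peval (h j) x)
    (hxu : x ∈ closedBall u δ) (j : Fin (m₂ + 1)) : 0 ≤ peval (extFamily h u δ j) x := by
  induction j using Fin.lastCases with
  | last => simpa [extFamily] using (peval_ballPoly_nonneg_iff hδ).2 hxu
  | cast j => simpa [extFamily] using hx j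

theorem PDLHAt.exists_isLagrangeCertificate (hp : PDLHAt f h T u δ) (hδ : 0 < δ)
    (hT : ∀ x ∈ T, (∀ i, peval (f i) x = 0) ∧ ∀ j, 0 ≤ peval (h j) x) {φ : Rn n →L[ℝ] ℝ}
    (hφ : φ ≠ 0) {v : Rn n} (hv : v ∈ T ∩ closedBall u δ)
    (hvmin : IsMinOn φ (T ∩ closedBall u δ) v) :
    ∃ g, IsLagrangeCertificate (closedBall u δ) (T ∩ closedBall u δ) φ v g ∧
      ∀ w ∈ T ∩ closedBall u δ, {j | peval (extFamily h u δ j) w = 0} =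
        {j | peval (extFamily h u δ j) v = 0} → peval g w = 0 := by
  obtain ⟨l, hl, c, hc, hlφ⟩ := exists_norm_eq_one_sum_mul_eq hφ
  obtain ⟨lam, mu, hmu, hcompl, hgrad, hdef⟩ := hp l hl δ hδ le_rfl v hv fun x hx => by
    rw [hlφ, hlφ]
    exact mul_le_mul_of_nonneg_left (hvmin hx) hc.le
  set H := extFamily h u δ
  have hpeval (w : Rn n) (hw : w ∈ T) :
      peval (lagrangian f H lam mu) w = ∑ j, mu j * peval (H j) w := by
    simp [peval_lagrangian, (hT w hw).1]
  refine ⟨lagrangian f H lam mu, ⟨fun x hx => ?_, fun x hx => ?_, ?_, c, hc, fun d => ?_⟩,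
    fun w hw hwv => ?_⟩
  · exact neg_phess_lagrangian f H lam mu x ▸ hdef x hx
  · rw [hpeval x hx.1]
    exact Finset.sum_nonneg fun j _ =>
      mul_nonneg (hmu j) (peval_extFamily_nonneg hδ.le (hT x hx.1).2 hx.2 j)
  · rw [hpeval v hv.1]
    exact Finset.sum_eq_zero fun j _ => hcompl j
  · simp only [pgrad_lagrangian, ← hgrad, hlφ]
  · rw [hpeval w hw.1]
    refine Finset.sum_eq_zero fun j _ => mul_eq_zero.2 ((mul_eq_zero.1 (hcompl j)).imp_right ?_)
    exact fun hj => hwv.ge hj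

theorem PDLHAt.isSpectrahedralShadow_convexHull (hp : PDLHAt f h T u δ) (hδ : 0 < δ)
    (hTc : IsCompact T) (hT : ∀ x ∈ T, (∀ i, peval (f i) x = 0) ∧ ∀ j, 0 ≤ peval (h j) x) :
    IsSpectrahedralShadow (convexHull ℝ (T ∩ closedBall u δ)) :=
  isSpectrahedralShadow_convexHull_of_certificates hδ.le (hTc.inter_right isClosed_closedBall)
    inter_subset_right (fun v => {j | peval (extFamily h u δ j) v = 0})
    fun _ hφ _ hv hvmin => hp.exists_isLagrangeCertificate hδ hT hφ hv hvmin

end Certificates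

/-! ### The convex boundary -/

section ConvexBoundary

variable {n : ℕ} {S T : Set (Rn n)}

theorem mem_convexBoundary_of_isMinOn {φ : Rn n →L[ℝ] ℝ} (hφ : φ ≠ 0) {u : Rn n} (hu : u ∈ T)
    (hmin : IsMinOn φ T u) : u ∈ convexBoundary T := by
  obtain ⟨l, hl, c, hc, hlφ⟩ := exists_norm_eq_one_sum_mul_eq hφ
  refine ⟨hu, l, hl, fun x hx => ?_⟩
  rw [hlφ, hlφ]
  exact mul_le_mul_of_nonneg_left (hmin hx) hc.le

theorem convexBoundary_inter_subset_frontier (hST : S ⊆ T) :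
    convexBoundary T ∩ S ⊆ frontier S := by
  rintro u ⟨⟨-, l, hl, hmin⟩, huS⟩
  refine ⟨subset_closure huS, fun hint => ?_⟩
  have hlocal : IsLocalMin (innerSL ℝ l) u := by
    filter_upwards [mem_interior_iff_mem_nhds.1 hint] with x hx
    simpa only [sum_mul_eq_inner, innerSL_apply_apply] using hmin x (hST hx)
  have hzero : innerSL ℝ l = 0 := hlocal.hasFDerivAt_eq_zero (innerSL ℝ l).hasFDerivAt
  have hnorm := innerSL_apply_norm ℝ l
  rw [hzero, norm_zero, hl] at hnorm
  exact zero_ne_one hnorm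

theorem isCompact_convexBoundary (hT : IsCompact T) : IsCompact (convexBoundary T) := by
  have heq : convexBoundary T = Prod.fst '' ((T ×ˢ sphere (0 : Rn n) 1) ∩
      ⋂ x ∈ T, {q : Rn n × Rn n | ∑ i, q.2 i * q.1 i ≤ ∑ i, q.2 i * x i}) := by
    ext u
    simp [convexBoundary, and_assoc]
  rw [heq]
  exact ((hT.prod (isCompact_sphere _ _)).inter_right <| isClosed_biInter fun x _ =>
    isClosed_le (by fun_prop) (by fun_prop)).image continuous_fst

theorem isClosed_setOf_peval {ι κ : Type*} (f : ι → MvPolynomial (Fin n) ℝ)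
    (h : κ → MvPolynomial (Fin n) ℝ) :
    IsClosed {x : Rn n | (∀ i, peval (f i) x = 0) ∧ ∀ j, 0 ≤ peval (h j) x} := by
  simp only [ofPred_and, ofPred_forall]
  exact (isClosed_iInter fun i => isClosed_eq (continuous_peval _) continuous_const).inter
    (isClosed_iInter fun j => isClosed_le continuous_const (continuous_peval _))

theorem exists_superset_convexBoundary_inter_of_PDLHAt {m₁ m₂ : ℕ}
    {f : Fin m₁ → MvPolynomial (Fin n) ℝ} {h : Fin m₂ → MvPolynomial (Fin n) ℝ}
    (hT : IsCompact T) (hST : S ⊆ T)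
    (hS : S = {x | (∀ i, peval (f i) x = 0) ∧ ∀ j, 0 ≤ peval (h j) x})
    (hpdlh : ∀ u ∈ convexBoundary T ∩ frontier S, ∃ δ > 0, PDLHAt f h S u δ) :
    ∃ R ⊆ S, convexBoundary T ∩ S ⊆ R ∧ IsClosed R ∧
      IsSpectrahedralShadow (convexHull ℝ R) := by
  have hclosed : IsClosed S := hS ▸ isClosed_setOf_peval f h
  have hcompact := hT.of_isClosed_subset hclosed hST
  refine IsSpectrahedralShadow.exists_superset_convexHull_of_forall_nhdsWithin
    ((isCompact_convexBoundary hT).inter_right hclosed) hcompact.isBounded fun u hu => ?_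
  obtain ⟨δ, hδ, hp⟩ := hpdlh u ⟨hu.1, convexBoundary_inter_subset_frontier hST hu⟩
  have hnhds : S ∩ closedBall u δ ∈ nhdsWithin u (convexBoundary T ∩ S) :=
    nhdsWithin_mono u inter_subset_right (inter_mem_nhdsWithin S (closedBall_mem_nhds u hδ))
  exact ⟨_, inter_subset_left, hclosed.inter isClosed_closedBall, hnhds,
    hp.isSpectrahedralShadow_convexHull hδ hcompact fun x hx => hS.le hx⟩

theorem convexHull_eq_convexHull_of_convexBoundary_subset {R : Set (Rn n)} (hT : IsCompact T)
    (hTn : T.Nontrivial) (hR : IsClosed R) (hRT : R ⊆ T) (hbR : convexBoundary T ⊆ R) :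
    convexHull ℝ T = convexHull ℝ R := by
  have hRc := hT.of_isClosed_subset hR hRT
  refine convexHull_eq_of_forall_exists_isMinOn hTn hRT (isCompact_convexHull hRc).isClosed
    fun φ hφ => ?_
  obtain ⟨u, hu, hmin⟩ := hT.exists_isMinOn hTn.nonempty φ.continuous.continuousOn
  exact ⟨u, hbR (mem_convexBoundary_of_isMinOn hφ hu hmin), hmin⟩

end ConvexBoundary

/-- if each `Tₖ` satisfies the PDLH condition at every point of
`∂_cT ∩ ∂Tₖ`, then `conv(T)` is SDP representable, where `T = ⋃ₖ Tₖ`. -/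
theorem isSDPRepresentable_convexHull_union_of_PDLH {n L : ℕ}
    (m1 m2 : Fin L → ℕ)
    (f : ∀ k, Fin (m1 k) → MvPolynomial (Fin n) ℝ)
    (h : ∀ k, Fin (m2 k) → MvPolynomial (Fin n) ℝ)
    (T : Fin L → Set (Rn n))
    (hT : ∀ k, T k = {x : Rn n | (∀ i, peval (f k i) x = 0) ∧ ∀ j, 0 ≤ peval (h k j) x})
    (Tun : Set (Rn n)) (hTun : Tun = ⋃ k, T k) (hcpt : IsCompact Tun)
    (hpdlh : ∀ k : Fin L, ∀ u ∈ convexBoundary Tun ∩ frontier (T k),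
      ∃ δu > 0, PDLHAt (f k) (h k) (T k) u δu) :
    IsSDPRepresentable (convexHull ℝ Tun) := by
  rcases Tun.subsingleton_or_nontrivial with hsub | hTn
  · rw [hsub.convex.convexHull_eq]
    exact (IsSpectrahedralShadow.of_subsingleton hsub).isSDPRepresentable
  have hsub (k : Fin L) : T k ⊆ Tun := hTun ▸ subset_iUnion T k
  choose R hRT hbR hRc hR using fun k =>
    exists_superset_convexBoundary_inter_of_PDLHAt hcpt (hsub k) (hT k) (hpdlh k)
  have hbound : convexBoundary Tun ⊆ ⋃ k, R k := fun u hu => by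
    obtain ⟨k, hk⟩ := mem_iUnion.1 (hTun ▸ hu.1)
    exact mem_iUnion.2 ⟨k, hbR k ⟨hu, hk⟩⟩
  rw [convexHull_eq_convexHull_of_convexBoundary_subset hcpt hTn (isClosed_iUnion_of_finite hRc)
    (iUnion_subset fun k => (hRT k).trans (hsub k)) hbound]
  exact (IsSpectrahedralShadow.convexHull_iUnion hR fun k =>
    hcpt.isBounded.subset ((hRT k).trans (hsub k))).isSDPRepresentable
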